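/- arXiv:1909.13850 — 2 statements merged into one kernel-verified Lean document; each statement's English description precedes it below -/
import Mathlib

section
/- Let X be a star decomposable simplicial complex, let W ⊆ V(X) induce a star partition of X, and let ≺ be a total order on W inducing a star decomposition of X (i.e. of (X,X₀) for some X₀ ⊆ V(X)). For v ∈ V(X) let p(v) be the ≺-last vertex among the w ∈ W with v ∈ st({w},X). Define a partial order ≺' on V(X) by: v ≺' v' whenever p(v) ≺ p(v'); v ≺' w whenever w ∈ W, p(v) = w and v ≠ w; and v, v' are ≺'-incomparable whenever p(v) = p(v') and v, v' ∉ W. Then X is vertex decomposable, with a shedding order that is a linear extension of ≺'. -/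
/-! Common definitions: finite abstract simplicial complexes, links, stars,
barycentric subdivision, joins, collapsibility, shellability, vertex
decomposability, star decomposability (also "in vertices"), and simplicial
homology (reduced, over ℤ and ℤ₂). -/

namespace Paper

open Finset

variable {V : Type*} [DecidableEq V]

/-- `K` is a (finite, abstract) simplicial complex: downward closed family of finsets. -/
def IsCplx (K : Finset (Finset V)) : Prop :=
  ∀ σ ∈ K, ∀ τ ⊆ σ, τ ∈ K

/-- Vertex set of a complex. -/
def verts (K : Finset (Finset V)) : Finset V := K.sup id

/-- Dimension of a complex (as an integer; `-1` for `∅` and `{∅}`). -/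
def dim (K : Finset (Finset V)) : ℤ := ((K.sup Finset.card : ℕ) : ℤ) - 1

/-- The facets (inclusion-maximal faces) of `K`. -/
def facets (K : Finset (Finset V)) : Finset (Finset V) :=
  K.filter fun σ => ∀ τ ∈ K, σ ⊆ τ → σ = τ

/-- `K` is pure `d`-dimensional: it is nonempty, every face has dimension at most `d`
and every face is contained in a face of dimension exactly `d`. -/
def PureDim (K : Finset (Finset V)) (d : ℤ) : Prop :=
  K.Nonempty ∧ (∀ σ ∈ K, (σ.card : ℤ) ≤ d + 1) ∧
    ∀ σ ∈ K, ∃ τ ∈ K, σ ⊆ τ ∧ (τ.card : ℤ) = d + 1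

/-- Link of a face. -/
def lk (σ : Finset V) (K : Finset (Finset V)) : Finset (Finset V) :=
  (K.filter fun τ => σ ⊆ τ).image fun τ => τ \ σ

/-- Closed star of a face. -/
def star (σ : Finset V) (K : Finset (Finset V)) : Finset (Finset V) :=
  K.filter fun τ => τ ∪ σ ∈ K

/-- Union of the closed stars of a set of vertices. -/
def starSet (S : Finset V) (K : Finset (Finset V)) : Finset (Finset V) :=
  K.filter fun τ => ∃ v ∈ S, τ ∪ {v} ∈ K

/-- Subcomplex induced on a vertex set `S`. -/
def induced (S : Finset V) (K : Finset (Finset V)) : Finset (Finset V) :=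
  K.filter fun σ => σ ⊆ S

/-- Deletion of a vertex:  `K - v`. -/
def deleteV (v : V) (K : Finset (Finset V)) : Finset (Finset V) :=
  K.filter fun σ => v ∉ σ

/-- The full simplex on vertex set `σ`. -/
def simplexCplx (σ : Finset V) : Finset (Finset V) := σ.powerset

/-- The boundary `∂σ` of the simplex on `σ`: all proper subsets of `σ`. -/
def bdSimplex (σ : Finset V) : Finset (Finset V) := σ.powerset.erase σ

/-- Barycentric subdivision: vertices are the nonempty faces of `K`, faces are
chains of nonempty faces of `K`. -/
def sd (K : Finset (Finset V)) : Finset (Finset (Finset V)) :=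
  if K = ∅ then ∅ else
    K.powerset.filter fun c => (∅ ∉ c) ∧ ∀ σ ∈ c, ∀ τ ∈ c, σ ⊆ τ ∨ τ ⊆ σ

/-- Join of two simplicial complexes (on the disjoint union of vertex types). -/
def join {α β : Type*} [DecidableEq α] [DecidableEq β]
    (X : Finset (Finset α)) (Y : Finset (Finset β)) : Finset (Finset (α ⊕ β)) :=
  (X ×ˢ Y).image fun p => p.1.image Sum.inl ∪ p.2.image Sum.inr

/-- `K'` arises from `K` by an elementary collapse: remove a free face `σ`
together with the unique face `τ` properly containing it. -/
def ElemCollapse (K K' : Finset (Finset V)) : Prop :=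
  ∃ σ ∈ K, ∃ τ ∈ K, σ ⊂ τ ∧ (∀ ρ ∈ K, σ ⊂ ρ → ρ = τ) ∧ K' = (K.erase σ).erase τ

/-- `K` collapses to `K'`. -/
def CollapsesTo (K K' : Finset (Finset V)) : Prop :=
  Relation.ReflTransGen ElemCollapse K K'

/-- `K` is collapsible: it collapses to a single vertex. -/
def Collapsible (K : Finset (Finset V)) : Prop :=
  ∃ w : V, CollapsesTo K ({∅, {w}} : Finset (Finset V))

/-- The removal-collapsibility condition: `K` is empty, or becomes collapsible
after removal of a set of facets. -/
def RC (K : Finset (Finset V)) : Prop :=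
  K = ∅ ∨ ∃ F ⊆ facets K, Collapsible (K \ F)

/-- The hereditary removal-collapsibility condition: the link of every face
(including the empty face, whose link is `K` itself) satisfies (RC). -/
def HRC (K : Finset (Finset V)) : Prop :=
  ∀ σ ∈ K, RC (lk σ K)

/-- `K` is shellable: there is a total order of its facets such that each facet
meets the union of the previous ones in a pure complex of codimension one. -/
def Shellable (K : Finset (Finset V)) : Prop :=
  ∃ L : List (Finset V), L.Nodup ∧ L.toFinset = facets K ∧
    ∀ i : ℕ, (hi : i < L.length) → 1 ≤ i →
      PureDim ((L.get ⟨i, hi⟩).powerset ∩ ((L.take i).map Finset.powerset).foldr (· ∪ ·) ∅)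
        (((L.get ⟨i, hi⟩).card : ℤ) - 2)

/-- Vertex decomposability (Provan–Billera) of a pure complex. -/
inductive VD : Finset (Finset V) → Prop
  | simplex (σ : Finset V) : VD σ.powerset
  | shed (K : Finset (Finset V)) (v : V) (hv : {v} ∈ K)
      (hdel : PureDim (deleteV v K) (dim K)) (hVDdel : VD (deleteV v K))
      (hlk : PureDim (lk {v} K) (dim K - 1)) (hVDlk : VD (lk {v} K)) : VD K

/-- `L` is a shedding order of `K` (a total order on `V(K)`, given as a
duplicate-free list, witnessing vertex decomposability; once a simplex is
reached, an arbitrary order of its vertices qualifies). -/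
inductive SheddingOrder : List V → Finset (Finset V) → Prop
  | simplex (σ : Finset V) (L : List V) (hnd : L.Nodup) (hfin : L.toFinset = σ) :
      SheddingOrder L σ.powerset
  | cons (v : V) (L : List V) (K : Finset (Finset V)) (hv : {v} ∈ K) (hvL : v ∉ L)
      (hcov : insert v L.toFinset = verts K)
      (hdel : PureDim (deleteV v K) (dim K))
      (hrest : SheddingOrder L (deleteV v K))
      (hlk : PureDim (lk {v} K) (dim K - 1)) (hVDlk : VD (lk {v} K)) :
      SheddingOrder (v :: L) K

/-- `W` induces a star partition of `X`: the stars of the vertices of `W`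
cover `X` and no two distinct vertices of `W` lie in a common face. -/
def StarPartition (W : Finset V) (X : Finset (Finset V)) : Prop :=
  (∀ σ ∈ X, ∃ w ∈ W, σ ∪ {w} ∈ X) ∧
    ∀ w₁ ∈ W, ∀ w₂ ∈ W, w₁ ≠ w₂ → ¬∃ σ ∈ X, w₁ ∈ σ ∧ w₂ ∈ σ

/-- The overlap `O_X(x, W') = lk(x,X) ∩ st(W',X)`. -/
def overlap (X : Finset (Finset V)) (x : V) (W' : Finset V) : Finset (Finset V) :=
  lk {x} X ∩ starSet W' X

/-- Star decomposability of the pair `(X, X₀)`.  The total order on the set `W`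
inducing the star partition is encoded as a duplicate-free list `L` (earlier in
the list = smaller in the order). -/
inductive StarDec : Finset (Finset V) → Finset V → Prop
  | base : StarDec ({∅} : Finset (Finset V)) (∅ : Finset V)
  | step (X : Finset (Finset V)) (X₀ : Finset V) (k : ℤ) (hk : 0 ≤ k) (hpure : PureDim X k)
      (L : List V) (hne : L ≠ []) (hnd : L.Nodup) (hsub : L.toFinset ⊆ verts X)
      (hsp : StarPartition L.toFinset X)
      (horder : ∃ i < L.length, X₀ = (L.drop i).toFinset)
      (U : ℕ → Finset V)
      (hUne : ∀ i, i + 1 < L.length → (U i).Nonempty)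
      (hUsub : ∀ i, (hi : i + 1 < L.length) →
        U i ⊆ verts (lk {L.get ⟨i, Nat.lt_of_succ_lt hi⟩} X))
      (hUst : ∀ i, (hi : i + 1 < L.length) →
        starSet (U i) (lk {L.get ⟨i, Nat.lt_of_succ_lt hi⟩} X) =
          overlap X (L.get ⟨i, Nat.lt_of_succ_lt hi⟩) ((L.drop (i + 1)).toFinset))
      (hlink : ∀ i, (hi : i + 1 < L.length) →
        StarDec (lk {L.get ⟨i, Nat.lt_of_succ_lt hi⟩} X) (U i))
      (Ulast : Finset V)
      (hlast : StarDec (lk {L.getLast hne} X) Ulast) :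
      StarDec X X₀

/-- The order encoded by the list `L` induces a star decomposition of `(X, X₀)`. -/
def InducesStarDecomp (L : List V) (X : Finset (Finset V)) (X₀ : Finset V) : Prop :=
  (L = [] ∧ X = ({∅} : Finset (Finset V)) ∧ X₀ = ∅) ∨
  ∃ hne : L ≠ [], L.Nodup ∧ StarPartition L.toFinset X ∧
    (∃ i < L.length, X₀ = (L.drop i).toFinset) ∧
    (∀ i, (hi : i + 1 < L.length) →
      ∃ U : Finset V, U.Nonempty ∧ U ⊆ verts (lk {L.get ⟨i, Nat.lt_of_succ_lt hi⟩} X) ∧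
        starSet U (lk {L.get ⟨i, Nat.lt_of_succ_lt hi⟩} X) =
          overlap X (L.get ⟨i, Nat.lt_of_succ_lt hi⟩) ((L.drop (i + 1)).toFinset) ∧
        StarDec (lk {L.get ⟨i, Nat.lt_of_succ_lt hi⟩} X) U) ∧
    (∃ U : Finset V, StarDec (lk {L.getLast hne} X) U)

/-- Star decomposability *in vertices* of the pair `(sd Y, Y₀)`; the data is the
underlying complex `Y` together with `Y₀ ⊆ V(Y)`.  The total order on `V(Y)` is
encoded as a duplicate-free list `L`. -/
inductive StarDecV : Finset (Finset V) → Finset V → Prop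
  | base : StarDecV ({∅} : Finset (Finset V)) (∅ : Finset V)
  | step (Y : Finset (Finset V)) (Y₀ : Finset V) (k : ℤ) (hk : 0 ≤ k) (hpure : PureDim Y k)
      (L : List V) (hne : L ≠ []) (hnd : L.Nodup) (hV : L.toFinset = verts Y)
      (horder : ∃ i < L.length, Y₀ = (L.drop i).toFinset)
      (hlink : ∀ i, (hi : i + 1 < L.length) →
        StarDecV (lk {L.get ⟨i, Nat.lt_of_succ_lt hi⟩} Y)
          (verts (lk {L.get ⟨i, Nat.lt_of_succ_lt hi⟩} Y) ∩ (L.drop (i + 1)).toFinset))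
      (hlast : StarDecV (lk {L.getLast hne} Y) (verts (lk {L.getLast hne} Y))) :
      StarDecV Y Y₀

/-- The order encoded by the list `L` induces a star decomposition of
`(sd Y, Y₀)` in vertices. -/
def InducesStarDecompV (L : List V) (Y : Finset (Finset V)) (Y₀ : Finset V) : Prop :=
  (L = [] ∧ Y = ({∅} : Finset (Finset V)) ∧ Y₀ = ∅) ∨
  ∃ hne : L ≠ [], L.Nodup ∧ L.toFinset = verts Y ∧
    (∃ i < L.length, Y₀ = (L.drop i).toFinset) ∧
    (∀ i, (hi : i + 1 < L.length) →
      StarDecV (lk {L.get ⟨i, Nat.lt_of_succ_lt hi⟩} Y)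
        (verts (lk {L.get ⟨i, Nat.lt_of_succ_lt hi⟩} Y) ∩ (L.drop (i + 1)).toFinset)) ∧
    StarDecV (lk {L.getLast hne} Y) (verts (lk {L.getLast hne} Y))

/-- Simplicial isomorphism between two complexes. -/
def SimpIso {α β : Type*} [DecidableEq α] [DecidableEq β]
    (K : Finset (Finset α)) (L : Finset (Finset β)) : Prop :=
  ∃ f : α → β, Set.InjOn f ↑(verts K) ∧ K.image (fun σ => σ.image f) = L

/-- Simplicial isomorphism of pairs (complex, subcomplex). -/
def SimpIsoPair {α β : Type*} [DecidableEq α] [DecidableEq β]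
    (K K₁ : Finset (Finset α)) (L L₁ : Finset (Finset β)) : Prop :=
  ∃ f : α → β, Set.InjOn f ↑(verts K) ∧ K.image (fun σ => σ.image f) = L ∧
    K₁.image (fun σ => σ.image f) = L₁

/-! Reduced simplicial homology (the empty face is included, so the chain
complex below, graded by cardinality of faces, computes *reduced* homology). -/

/-- Faces of `K` of cardinality `n`. -/
def kfaces (K : Finset (Finset V)) (n : ℕ) : Finset (Finset V) :=
  K.filter fun σ => σ.card = n

/-- The mod 2 boundary operator, from chains on faces of cardinality `n+1`
to chains on faces of cardinality `n`. -/
noncomputable def bdry2 (K : Finset (Finset V)) (n : ℕ) :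
    (↥(kfaces K (n + 1)) → ZMod 2) →ₗ[ZMod 2] (↥(kfaces K n) → ZMod 2) :=
  Matrix.mulVecLin (Matrix.of fun (τ : ↥(kfaces K n)) (σ : ↥(kfaces K (n + 1))) =>
    if (τ : Finset V) ⊆ (σ : Finset V) then (1 : ZMod 2) else 0)

/-- The reduced Betti number `β̃ᵢ(K; ℤ₂)`. -/
noncomputable def betti2 (K : Finset (Finset V)) (i : ℕ) : ℕ :=
  Module.finrank (ZMod 2) (LinearMap.ker (bdry2 K i)) -
    Module.finrank (ZMod 2) (LinearMap.range (bdry2 K (i + 1)))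

/-- Signed incidence coefficient (with respect to an arbitrary, but fixed,
linear order on the vertices; reduced homology does not depend on the choice). -/
noncomputable def coeffInt (σ τ : Finset V) : ℤ :=
  letI : LinearOrder V := IsWellOrder.linearOrder WellOrderingRel
  (σ \ τ).sum fun v => (-1 : ℤ) ^ ((σ.filter fun u => u < v).card)

/-- The integral boundary operator, from chains on faces of cardinality `n+1`
to chains on faces of cardinality `n`. -/
noncomputable def bdryZ (K : Finset (Finset V)) (n : ℕ) :
    (↥(kfaces K (n + 1)) → ℤ) →ₗ[ℤ] (↥(kfaces K n) → ℤ) :=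
  Matrix.mulVecLin (Matrix.of fun (τ : ↥(kfaces K n)) (σ : ↥(kfaces K (n + 1))) =>
    if (τ : Finset V) ⊆ (σ : Finset V) then coeffInt (σ : Finset V) (τ : Finset V) else 0)

/-- `K` has trivial reduced (integral) homology: `H̃ₙ(K; ℤ) = 0` for all
`n ≥ -1`. -/
def TrivialRedHomology (K : Finset (Finset V)) : Prop :=
  K.Nonempty ∧ LinearMap.range (bdryZ K 0) = ⊤ ∧
    ∀ n : ℕ, LinearMap.ker (bdryZ K n) = LinearMap.range (bdryZ K (n + 1))

/-- Reduced Euler characteristic. -/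
def redEuler (K : Finset (Finset V)) : ℤ :=
  (∑ σ ∈ K.filter fun σ => σ ≠ ∅, (-1 : ℤ) ^ (σ.card - 1)) - 1


section Helpers

theorem mem_lk1 {w : V} {X : Finset (Finset V)} {τ : Finset V} :
    τ ∈ lk {w} X ↔ w ∉ τ ∧ insert w τ ∈ X := by
  unfold lk
  simp only [mem_image, mem_filter, singleton_subset_iff]
  constructor
  · rintro ⟨ρ, ⟨hρ, hw⟩, rfl⟩
    refine ⟨by simp, ?_⟩
    rw [Finset.sdiff_singleton_eq_erase, Finset.insert_erase hw]
    exact hρ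
  · rintro ⟨h1, h2⟩
    refine ⟨insert w τ, ⟨h2, by simp⟩, ?_⟩
    rw [Finset.sdiff_singleton_eq_erase, Finset.erase_insert h1]

theorem insert_erase1 (w : V) (σ : Finset V) : insert w (σ.erase w) = insert w σ := by
  ext x
  simp only [mem_insert, mem_erase]
  tauto

theorem mem_starSet1 {S : Finset V} {X : Finset (Finset V)} (hX : IsCplx X) {τ : Finset V} :
    τ ∈ starSet S X ↔ ∃ v ∈ S, insert v τ ∈ X := by
  unfold starSet
  simp only [mem_filter, Finset.union_singleton]
  constructor
  · exact fun h => h.2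
  · rintro ⟨v, hv, h⟩
    exact ⟨hX _ h _ (Finset.subset_insert _ _), v, hv, h⟩

theorem mem_deleteV1 {v : V} {K : Finset (Finset V)} {τ : Finset V} :
    τ ∈ deleteV v K ↔ τ ∈ K ∧ v ∉ τ := by
  simp [deleteV]

theorem mem_verts1 {K : Finset (Finset V)} (hK : IsCplx K) {v : V} :
    v ∈ verts K ↔ {v} ∈ K := by
  unfold verts
  rw [Finset.mem_sup]
  constructor
  · rintro ⟨σ, hσ, hv⟩
    exact hK _ hσ _ (by simpa using hv)
  · intro h
    exact ⟨_, h, by simp⟩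

theorem cplx_lk {w : V} {X : Finset (Finset V)} (hX : IsCplx X) : IsCplx (lk {w} X) := by
  intro σ hσ τ hτ
  rw [mem_lk1] at *
  exact ⟨fun h => hσ.1 (hτ h), hX _ hσ.2 _ (Finset.insert_subset_insert _ hτ)⟩

theorem cplx_starSet {S : Finset V} {X : Finset (Finset V)} (hX : IsCplx X) :
    IsCplx (starSet S X) := by
  intro σ hσ τ hτ
  rw [mem_starSet1 hX] at *
  obtain ⟨v, hv, h⟩ := hσ
  exact ⟨v, hv, hX _ h _ (Finset.insert_subset_insert _ hτ)⟩

theorem cplx_deleteV {v : V} {X : Finset (Finset V)} (hX : IsCplx X) : IsCplx (deleteV v X) := by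
  intro σ hσ τ hτ
  rw [mem_deleteV1] at *
  exact ⟨hX _ hσ.1 _ hτ, fun h => hσ.2 (hτ h)⟩

theorem cplx_union {X Y : Finset (Finset V)} (hX : IsCplx X) (hY : IsCplx Y) :
    IsCplx (X ∪ Y) := by
  intro σ hσ τ hτ
  rw [mem_union] at *
  exact hσ.imp (fun h => hX _ h _ hτ) (fun h => hY _ h _ hτ)

theorem dim_eq_of_pure {K : Finset (Finset V)} {d : ℤ} (h : PureDim K d) : dim K = d := by
  obtain ⟨⟨σ, hσ⟩, h1, h2⟩ := h
  obtain ⟨τ, hτ, -, hc⟩ := h2 σ hσ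
  unfold dim
  have : K.sup Finset.card = τ.card := by
    apply le_antisymm
    · apply Finset.sup_le
      intro ρ hρ
      have := h1 ρ hρ
      omega
    · exact Finset.le_sup (f := Finset.card) hτ
  rw [this, hc]; ring

/-- Purity of a complex from that of a deletion and a link. -/
theorem pure_of_del_lk {K : Finset (Finset V)} {d : ℤ} {v : V}
    (h1 : PureDim (deleteV v K) d) (h2 : PureDim (lk {v} K) (d - 1)) : PureDim K d := by
  obtain ⟨⟨σ, hσ⟩, a1, a2⟩ := h1
  obtain ⟨-, b1, b2⟩ := h2
  have key : ∀ σ ∈ K, v ∈ σ → σ.erase v ∈ lk {v} K := by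
    intro σ hσ hv
    rw [mem_lk1, Finset.insert_erase hv]
    exact ⟨by simp, hσ⟩
  refine ⟨⟨σ, (mem_deleteV1.1 hσ).1⟩, ?_, ?_⟩
  · intro σ hσ
    by_cases hv : v ∈ σ
    · have := b1 _ (key σ hσ hv)
      have h3 := Finset.card_erase_add_one hv
      omega
    · exact a1 _ (mem_deleteV1.2 ⟨hσ, hv⟩)
  · intro σ hσ
    by_cases hv : v ∈ σ
    · obtain ⟨τ, hτ, hs, hc⟩ := b2 _ (key σ hσ hv)
      rw [mem_lk1] at hτ
      refine ⟨_, hτ.2, ?_, ?_⟩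
      · rw [← Finset.insert_erase hv]
        exact Finset.insert_subset_insert _ hs
      · rw [Finset.card_insert_of_notMem hτ.1]
        push_cast; omega
    · obtain ⟨τ, hτ, hs, hc⟩ := a2 _ (mem_deleteV1.2 ⟨hσ, hv⟩)
      exact ⟨τ, (mem_deleteV1.1 hτ).1, hs, hc⟩

theorem pure_union {X Y : Finset (Finset V)} {d : ℤ} (hX : PureDim X d) (hY : PureDim Y d) :
    PureDim (X ∪ Y) d := by
  obtain ⟨⟨σ, hσ⟩, a1, a2⟩ := hX
  obtain ⟨-, b1, b2⟩ := hY
  refine ⟨⟨σ, mem_union_left _ hσ⟩, ?_, ?_⟩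
  · intro σ hσ
    rcases mem_union.1 hσ with h | h
    · exact a1 _ h
    · exact b1 _ h
  · intro σ hσ
    rcases mem_union.1 hσ with h | h
    · obtain ⟨τ, hτ, h'⟩ := a2 _ h
      exact ⟨τ, mem_union_left _ hτ, h'⟩
    · obtain ⟨τ, hτ, h'⟩ := b2 _ h
      exact ⟨τ, mem_union_right _ hτ, h'⟩

theorem pure_starSet {S : Finset V} {X : Finset (Finset V)} {d : ℤ} (hX : IsCplx X)
    (hp : PureDim X d) (hS : S.Nonempty) (hSX : ∀ v ∈ S, {v} ∈ X) : PureDim (starSet S X) d := by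
  obtain ⟨-, a1, a2⟩ := hp
  refine ⟨?_, ?_, ?_⟩
  · obtain ⟨v, hv⟩ := hS
    exact ⟨∅, (mem_starSet1 hX).2 ⟨v, hv, by simpa using hSX v hv⟩⟩
  · intro σ hσ
    exact a1 _ (Finset.mem_filter.1 hσ).1
  · intro σ hσ
    obtain ⟨v, hv, h⟩ := (mem_starSet1 hX).1 hσ
    obtain ⟨τ, hτ, hs, hc⟩ := a2 _ h
    refine ⟨τ, (mem_starSet1 hX).2 ⟨v, hv, ?_⟩, (Finset.subset_insert _ _).trans hs, hc⟩
    rwa [Finset.insert_eq_of_mem (hs (Finset.mem_insert_self _ _))]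

theorem pure_lk {w : V} {X : Finset (Finset V)} {d : ℤ}
    (hp : PureDim X d) (hw : {w} ∈ X) : PureDim (lk {w} X) (d - 1) := by
  obtain ⟨-, a1, a2⟩ := hp
  refine ⟨⟨∅, mem_lk1.2 ⟨by simp, by simpa using hw⟩⟩, ?_, ?_⟩
  · intro σ hσ
    rw [mem_lk1] at hσ
    have := a1 _ hσ.2
    rw [Finset.card_insert_of_notMem hσ.1] at this
    push_cast at this; omega
  · intro σ hσ
    rw [mem_lk1] at hσ
    obtain ⟨τ, hτ, hs, hc⟩ := a2 _ hσ.2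
    have hw : w ∈ τ := hs (Finset.mem_insert_self _ _)
    refine ⟨τ.erase w, mem_lk1.2 ⟨by simp, by rwa [Finset.insert_erase hw]⟩, ?_, ?_⟩
    · exact Finset.subset_erase.2 ⟨(Finset.subset_insert _ _).trans hs, hσ.1⟩
    · have h3 := Finset.card_erase_add_one hw
      omega

/-- Cone with apex `w` over `K`. -/
def coneV (w : V) (K : Finset (Finset V)) : Finset (Finset V) := K ∪ K.image (insert w)

theorem mem_coneV {w : V} {K : Finset (Finset V)} (hw : ∀ σ ∈ K, w ∉ σ) {σ : Finset V} :
    σ ∈ coneV w K ↔ σ.erase w ∈ K := by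
  unfold coneV
  rw [mem_union, mem_image]
  constructor
  · rintro (h | ⟨τ, hτ, rfl⟩)
    · rwa [Finset.erase_eq_of_notMem (hw _ h)]
    · rwa [Finset.erase_insert (hw _ hτ)]
  · intro h
    by_cases hs : w ∈ σ
    · exact Or.inr ⟨_, h, Finset.insert_erase hs⟩
    · left
      rwa [Finset.erase_eq_of_notMem hs] at h

theorem cplx_coneV {w : V} {K : Finset (Finset V)} (hK : IsCplx K) (hw : ∀ σ ∈ K, w ∉ σ) :
    IsCplx (coneV w K) := by
  intro σ hσ τ hτ
  rw [mem_coneV hw] at *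
  exact hK _ hσ _ (Finset.erase_subset_erase _ hτ)

theorem pure_coneV {w : V} {K : Finset (Finset V)} {d : ℤ} (hw : ∀ σ ∈ K, w ∉ σ)
    (hp : PureDim K (d - 1)) : PureDim (coneV w K) d := by
  obtain ⟨⟨σ, hσ⟩, a1, a2⟩ := hp
  refine ⟨⟨σ, mem_union_left _ hσ⟩, ?_, ?_⟩
  · intro σ hσ
    have := a1 _ ((mem_coneV hw).1 hσ)
    have h3 := Finset.pred_card_le_card_erase (s := σ) (a := w)
    omega
  · intro σ hσ
    obtain ⟨τ, hτ, hs, hc⟩ := a2 _ ((mem_coneV hw).1 hσ)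
    refine ⟨insert w τ, (mem_coneV hw).2 (by rwa [Finset.erase_insert (hw _ hτ)]), ?_, ?_⟩
    · intro x hx
      by_cases hxw : x = w
      · simp [hxw]
      · exact Finset.mem_insert_of_mem (hs (Finset.mem_erase.2 ⟨hxw, hx⟩))
    · rw [Finset.card_insert_of_notMem (hw _ hτ)]
      push_cast; omega

theorem notMem_lk {w v : V} {K : Finset (Finset V)} (hw : ∀ σ ∈ K, w ∉ σ) :
    ∀ σ ∈ lk {v} K, w ∉ σ := by
  intro σ hσ h
  exact hw _ (mem_lk1.1 hσ).2 (Finset.mem_insert_of_mem h)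

theorem notMem_del {w v : V} {K : Finset (Finset V)} (hw : ∀ σ ∈ K, w ∉ σ) :
    ∀ σ ∈ deleteV v K, w ∉ σ := fun σ hσ => hw _ (mem_deleteV1.1 hσ).1

/-- Deleting from a cone glued to a complex not containing the deleted vertex. -/
theorem del_cone_union {w v : V} {K Y : Finset (Finset V)} (hw : ∀ σ ∈ K, w ∉ σ)
    (hvw : v ≠ w) (hvY : ∀ σ ∈ Y, v ∉ σ) :
    deleteV v (coneV w K ∪ Y) = coneV w (deleteV v K) ∪ Y := by
  ext σ
  simp only [mem_deleteV1, mem_union, mem_coneV hw, mem_coneV (notMem_del hw), mem_erase]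
  have := hvY σ
  tauto

theorem lk_cone_union {w v : V} {K Y : Finset (Finset V)} (hw : ∀ σ ∈ K, w ∉ σ)
    (hvw : v ≠ w) (hvY : ∀ σ ∈ Y, v ∉ σ) :
    lk {v} (coneV w K ∪ Y) = coneV w (lk {v} K) := by
  ext σ
  have h1 : insert v σ ∉ Y := fun h => hvY _ h (Finset.mem_insert_self _ _)
  have h2 : (insert v σ).erase w = insert v (σ.erase w) := by
    rw [Finset.erase_insert_of_ne hvw]
  simp only [mem_lk1, mem_union, mem_coneV hw, mem_coneV (notMem_lk hw), mem_erase, h2]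
  tauto

theorem del_cone {w v : V} {K : Finset (Finset V)} (hw : ∀ σ ∈ K, w ∉ σ)
    (hvw : v ≠ w) : deleteV v (coneV w K) = coneV w (deleteV v K) := by
  simpa using del_cone_union (Y := ∅) hw hvw (by simp)

theorem lk_cone {w v : V} {K : Finset (Finset V)} (hw : ∀ σ ∈ K, w ∉ σ)
    (hvw : v ≠ w) : lk {v} (coneV w K) = coneV w (lk {v} K) := by
  simpa using lk_cone_union (Y := ∅) hw hvw (by simp)

theorem verts_del {v : V} {K : Finset (Finset V)} (hK : IsCplx K) :
    verts (deleteV v K) = (verts K).erase v := by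
  ext x
  rw [mem_verts1 (cplx_deleteV hK), mem_erase, mem_verts1 hK, mem_deleteV1, mem_singleton]
  tauto

theorem cplx_powerset (σ : Finset V) : IsCplx σ.powerset := by
  intro τ hτ ρ hρ
  rw [mem_powerset] at *
  exact hρ.trans hτ

theorem SheddingOrder.facts {M : List V} {K : Finset (Finset V)} (h : SheddingOrder M K)
    (hK : IsCplx K) : M.Nodup ∧ M.toFinset = verts K := by
  induction h with
  | simplex σ L hnd hfin =>
    refine ⟨hnd, ?_⟩
    ext x
    rw [mem_verts1 hK, hfin]; simp
  | cons v L K hv hvL hcov hdel hrest hlk hVDlk ih =>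
    exact ⟨List.nodup_cons.2 ⟨hvL, (ih (cplx_deleteV hK)).1⟩, by simpa using hcov⟩

theorem SheddingOrder.vd {M : List V} {K : Finset (Finset V)} (h : SheddingOrder M K) :
    VD K := by
  induction h with
  | simplex σ L hnd hfin => exact VD.simplex σ
  | cons v L K hv hvL hcov hdel hrest hlk hVDlk ih => exact VD.shed K v hv hdel ih hlk hVDlk

/-- Prepending a shed vertex. -/
theorem SheddingOrder.cons' {v : V} {M : List V} {K : Finset (Finset V)} {d : ℤ}
    (hK : IsCplx K) (hv : {v} ∈ K) (hdel : PureDim (deleteV v K) d)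
    (hrest : SheddingOrder M (deleteV v K)) (hlk : PureDim (lk {v} K) (d - 1))
    (hVDlk : VD (lk {v} K)) : SheddingOrder (v :: M) K := by
  have hd := dim_eq_of_pure (pure_of_del_lk hdel hlk)
  obtain ⟨-, hM⟩ := hrest.facts (cplx_deleteV hK)
  rw [verts_del hK] at hM
  refine SheddingOrder.cons v M K hv ?_ ?_ (by rwa [hd]) hrest (by rwa [hd]) hVDlk
  · rw [← List.mem_toFinset, hM]; simp
  · rw [hM, Finset.insert_erase ((mem_verts1 hK).2 hv)]

theorem cone_shedding {K : Finset (Finset V)} (h : VD K) (w : V) (hK : IsCplx K)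
    (hw : ∀ σ ∈ K, w ∉ σ) : ∃ M : List V, SheddingOrder (M ++ [w]) (coneV w K) := by
  induction h with
  | simplex σ =>
    have hwσ : w ∉ σ := hw σ (by simp)
    have : coneV w σ.powerset = (insert w σ).powerset := by
      ext τ
      rw [mem_coneV hw, mem_powerset, mem_powerset, Finset.subset_insert_iff]
    rw [this]
    refine ⟨σ.toList, SheddingOrder.simplex _ _ ?_ ?_⟩
    · rw [List.nodup_append]
      refine ⟨σ.nodup_toList, by simp, ?_⟩
      intro a ha b hb hab
      simp at ha hb
      subst hab; subst hb; exact hwσ ha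
    · ext x; simp [or_comm]
  | shed K v hv hdel hVDdel hlk hVDlk ih1 ih2 =>
    obtain ⟨M, hM⟩ := ih1 (cplx_deleteV hK) (notMem_del hw)
    obtain ⟨N, hN⟩ := ih2 (cplx_lk hK) (notMem_lk hw)
    have hvw : v ≠ w := by
      rintro rfl
      exact hw _ hv (by simp)
    refine ⟨v :: M, ?_⟩
    rw [List.cons_append]
    refine SheddingOrder.cons' (d := dim K + 1) (cplx_coneV hK hw) (mem_union_left _ hv) ?_ ?_ ?_ ?_
    · rw [del_cone hw hvw]
      exact pure_coneV (notMem_del hw) (by simpa using hdel)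
    · rwa [del_cone hw hvw]
    · rw [lk_cone hw hvw]
      exact pure_coneV (notMem_lk hw) (by simpa using hlk)
    · rw [lk_cone hw hvw]
      exact hN.vd

theorem vd_cone {K : Finset (Finset V)} (h : VD K) (w : V) (hK : IsCplx K)
    (hw : ∀ σ ∈ K, w ∉ σ) : VD (coneV w K) := by
  obtain ⟨M, hM⟩ := cone_shedding h w hK hw
  exact hM.vd

/-- `K'` is obtained from `K` by shedding the vertices in the list one after the other. -/
inductive ShedTo (d : ℤ) : List V → Finset (Finset V) → Finset (Finset V) → Prop
  | nil (K : Finset (Finset V)) : ShedTo d [] K K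
  | cons (v : V) (A : List V) (K K' : Finset (Finset V)) (hv : {v} ∈ K)
      (hdel : PureDim (deleteV v K) d) (hlk : PureDim (lk {v} K) (d - 1))
      (hVD : VD (lk {v} K)) (hrest : ShedTo d A (deleteV v K) K') : ShedTo d (v :: A) K K'

theorem ShedTo.append {d : ℤ} {A B : List V} {K K' K'' : Finset (Finset V)}
    (h : ShedTo d A K K') (h' : ShedTo d B K' K'') : ShedTo d (A ++ B) K K'' := by
  induction h with
  | nil K => exact h'
  | cons v A K K' hv hdel hlk hVD hrest ih =>
    exact ShedTo.cons v _ K _ hv hdel hlk hVD (ih h')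

theorem ShedTo.subset {d : ℤ} {A : List V} {K K' : Finset (Finset V)}
    (h : ShedTo d A K K') : K' ⊆ K := by
  induction h with
  | nil K => exact subset_rfl
  | cons v A K K' hv hdel hlk hVD hrest ih => exact ih.trans (Finset.filter_subset _ _)

theorem ShedTo.mem {d : ℤ} {A : List V} {K K' : Finset (Finset V)}
    (h : ShedTo d A K K') : ∀ a ∈ A, {a} ∈ K ∧ {a} ∉ K' := by
  induction h with
  | nil K => simp
  | cons v A K K' hv hdel hlk hVD hrest ih =>
    intro a ha
    rcases List.mem_cons.1 ha with rfl | ha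
    · refine ⟨hv, fun h => ?_⟩
      have := hrest.subset h
      rw [mem_deleteV1] at this
      simp at this
    · have := ih a ha
      exact ⟨(mem_deleteV1.1 this.1).1, this.2⟩

theorem ShedTo.shedding {d : ℤ} {A : List V} {K K' : Finset (Finset V)}
    (h : ShedTo d A K K') (hK : IsCplx K) {M : List V} (hM : SheddingOrder M K') :
    SheddingOrder (A ++ M) K := by
  induction h with
  | nil K => exact hM
  | cons v A K K' hv hdel hlk hVD hrest ih =>
    exact SheddingOrder.cons' hK hv hdel (ih (cplx_deleteV hK) hM) hlk hVD

theorem ShedTo.vd {d : ℤ} {A : List V} {K K' : Finset (Finset V)}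
    (h : ShedTo d A K K') (hM : VD K') : VD K := by
  induction h with
  | nil K => exact hM
  | cons v A K K' hv hdel hlk hVD hrest ih =>
    have hd := dim_eq_of_pure (pure_of_del_lk hdel hlk)
    exact VD.shed K v hv (by rwa [hd]) (ih hM) (by rwa [hd]) hVD

/-- Shedding inside a link lifts to a cone glued to a complex. -/
theorem ShedTo.cone_union {d : ℤ} {A : List V} {K K' Y Kw : Finset (Finset V)} {w : V}
    (h : ShedTo (d - 1) A K K') (hK : IsCplx K) (hw : ∀ σ ∈ Kw, w ∉ σ) (hKw : K ⊆ Kw)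
    (hK' : K' = Kw ∩ Y) (hY : IsCplx Y) (hYp : PureDim Y d) :
    ShedTo d A (coneV w K ∪ Y) (coneV w K' ∪ Y) := by
  induction h with
  | nil K => exact ShedTo.nil _
  | cons v A K K' hv hdel hlk hVD hrest ih =>
    have hwK : ∀ σ ∈ K, w ∉ σ := fun σ hσ => hw σ (hKw hσ)
    have hvw : v ≠ w := by
      rintro rfl
      exact hwK _ hv (by simp)
    have hvY : ∀ σ ∈ Y, v ∉ σ := by
      intro σ hσ hvσ
      have h1 : {v} ∈ Y := hY _ hσ _ (by simpa using hvσ)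
      have h2 : {v} ∈ K' := by
        rw [hK']; exact mem_inter.2 ⟨hKw hv, h1⟩
      have := hrest.subset h2
      rw [mem_deleteV1] at this
      simp at this
    refine ShedTo.cons v A _ _ (mem_union_left _ (mem_union_left _ hv)) ?_ ?_ ?_ ?_
    · rw [del_cone_union hwK hvw hvY]
      exact pure_union (pure_coneV (notMem_del hwK) hdel) hYp
    · rw [lk_cone_union hwK hvw hvY]
      exact pure_coneV (notMem_lk hwK) hlk
    · rw [lk_cone_union hwK hvw hvY]
      exact vd_cone hVD w (cplx_lk hK) (notMem_lk hwK)
    · rw [del_cone_union hwK hvw hvY]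
      exact ih (cplx_deleteV hK) ((Finset.filter_subset _ _).trans hKw) hK'

/-- Shedding a whole star. -/
theorem shed_star {X : Finset (Finset V)} {k : ℤ} (hX : IsCplx X) (hp : PureDim X k) {w : V}
    {T U : Finset V} (hw : {w} ∈ X) (hT : T.Nonempty) (hTX : ∀ t ∈ T, {t} ∈ X)
    (hpart : ∀ t ∈ T, ∀ σ ∈ X, w ∈ σ → t ∉ σ)
    (hU : U.Nonempty) (hUs : ∀ u ∈ U, {u} ∈ lk {w} X)
    (hov : starSet U (lk {w} X) = overlap X w T) (hVD : VD (starSet U (lk {w} X)))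
    {A : List V} (hA : ShedTo (k - 1) A (lk {w} X) (starSet U (lk {w} X))) :
    ShedTo k (A ++ [w]) (starSet (insert w T) X) (starSet T X) := by
  have hwl : ∀ σ ∈ lk {w} X, w ∉ σ := fun σ hσ => (mem_lk1.1 hσ).1
  have hY := cplx_starSet (S := T) hX
  have hYp := pure_starSet hX hp hT hTX
  have hwY : ∀ σ ∈ starSet T X, w ∉ σ := by
    intro σ hσ hwσ
    obtain ⟨t, ht, h⟩ := (mem_starSet1 hX).1 hσ
    exact hpart t ht _ h (Finset.mem_insert_of_mem hwσ) (Finset.mem_insert_self _ _)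
  have h1 := hA.cone_union (cplx_lk hX) hwl subset_rfl hov hY hYp
  have h0 : starSet (insert w T) X = coneV w (lk {w} X) ∪ starSet T X := by
    ext σ
    rw [mem_union, mem_coneV hwl, mem_lk1, mem_starSet1 hX, mem_starSet1 hX, insert_erase1]
    simp
  rw [h0]
  refine h1.append ?_
  have hK'w : ∀ σ ∈ starSet U (lk {w} X), w ∉ σ := fun σ hσ => hwl _ (Finset.filter_subset _ _ hσ)
  have hK'Y : starSet U (lk {w} X) ⊆ starSet T X := by
    rw [hov]; exact Finset.inter_subset_right
  have hK'p : PureDim (starSet U (lk {w} X)) (k - 1) :=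
    pure_starSet (cplx_lk hX) (pure_lk hp hw) hU hUs
  have hdel : deleteV w (coneV w (starSet U (lk {w} X)) ∪ starSet T X) = starSet T X := by
    ext σ
    rw [mem_deleteV1, mem_union, mem_coneV hK'w]
    constructor
    · rintro ⟨h | h, h'⟩
      · rw [Finset.erase_eq_of_notMem h'] at h
        exact hK'Y h
      · exact h
    · exact fun h => ⟨Or.inr h, hwY _ h⟩
  have hlk : lk {w} (coneV w (starSet U (lk {w} X)) ∪ starSet T X) = starSet U (lk {w} X) := by
    ext σ
    rw [mem_lk1, mem_union, mem_coneV hK'w]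
    constructor
    · rintro ⟨h', h | h⟩
      · rwa [Finset.erase_insert h'] at h
      · exact absurd (Finset.mem_insert_self _ _) (hwY _ h)
    · intro h
      refine ⟨hK'w _ h, Or.inl ?_⟩
      rwa [Finset.erase_insert (hK'w _ h)]
  refine ShedTo.cons w [] _ _ ?_ ?_ ?_ ?_ ?_
  · rw [mem_union, mem_coneV hK'w]
    left
    have : ({w} : Finset V).erase w = ∅ := by simp
    rw [this]
    obtain ⟨σ, hσ⟩ := hK'p.1
    exact cplx_starSet (cplx_lk hX) _ hσ _ (by simp)
  · rwa [hdel]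
  · rwa [hlk]
  · rwa [hlk]
  · rw [hdel]; exact ShedTo.nil _

/-- What is proved by induction about a star decomposable pair. -/
def GoodPair (X : Finset (Finset V)) (X₀ : Finset V) : Prop :=
  X.Nonempty ∧ (IsCplx X → ∀ k : ℤ, PureDim X k → VD X ∧
    (X₀.Nonempty → VD (starSet X₀ X) ∧ ∃ A : List V, ShedTo k A X (starSet X₀ X)))

/-- Star decomposition data in a form suitable for list induction. -/
structure GoodData (L : List V) (X : Finset (Finset V)) (k : ℤ) : Prop where
  cplx : IsCplx X
  pure : PureDim X k
  nodup : L.Nodup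
  mem : ∀ w ∈ L, {w} ∈ X
  part : StarPartition L.toFinset X
  link : ∀ P w T, L = P ++ w :: T → T ≠ [] → ∃ A : List V,
    ShedTo k (A ++ [w]) (starSet (w :: T).toFinset X) (starSet T.toFinset X)
  last : ∀ P w, L = P ++ [w] → VD (lk {w} X)

theorem GoodData.of {L : List V} {X : Finset (Finset V)} {k : ℤ} (hX : IsCplx X)
    (hp : PureDim X k) (hnd : L.Nodup) (hsp : StarPartition L.toFinset X) (hne : L ≠ [])
    (hlink : ∀ i, (hi : i + 1 < L.length) →
      ∃ U : Finset V, U.Nonempty ∧ U ⊆ verts (lk {L.get ⟨i, Nat.lt_of_succ_lt hi⟩} X) ∧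
        starSet U (lk {L.get ⟨i, Nat.lt_of_succ_lt hi⟩} X) =
          overlap X (L.get ⟨i, Nat.lt_of_succ_lt hi⟩) ((L.drop (i + 1)).toFinset) ∧
        GoodPair (lk {L.get ⟨i, Nat.lt_of_succ_lt hi⟩} X) U)
    (hlast : ∃ U : Finset V, GoodPair (lk {L.getLast hne} X) U) : GoodData L X k := by
  have hne' : ∀ w, (lk {w} X).Nonempty → {w} ∈ X := by
    rintro w ⟨σ, hσ⟩
    exact hX _ (mem_lk1.1 hσ).2 _ (by simp)
  have hlink' : ∀ P w T, L = P ++ w :: T → T ≠ [] → ∃ U : Finset V, U.Nonempty ∧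
      U ⊆ verts (lk {w} X) ∧ starSet U (lk {w} X) = overlap X w T.toFinset ∧
      GoodPair (lk {w} X) U := by
    intro P w T hL hT
    have hi : P.length + 1 < L.length := by
      have := List.length_pos_iff.2 hT
      rw [hL]; simp; omega
    have h := hlink P.length hi
    have h1 : L.get ⟨P.length, Nat.lt_of_succ_lt hi⟩ = w := by
      subst hL; simp
    have h2 : L.drop (P.length + 1) = T := by
      subst hL; simp
    rwa [h1, h2] at h
  have hlast' : ∀ P w, L = P ++ [w] → ∃ U : Finset V, GoodPair (lk {w} X) U := by
    intro P w hL
    have h1 : L.getLast hne = w := by subst hL; simp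
    rwa [h1] at hlast
  have hmem : ∀ w ∈ L, {w} ∈ X := by
    intro w hw
    obtain ⟨P, T, hL⟩ := List.append_of_mem hw
    by_cases hT : T = []
    · subst hT
      obtain ⟨U, hU⟩ := hlast' P w hL
      exact hne' w hU.1
    · obtain ⟨U, -, -, -, hU⟩ := hlink' P w T hL hT
      exact hne' w hU.1
  refine ⟨hX, hp, hnd, hmem, hsp, ?_, ?_⟩
  · intro P w T hL hT
    obtain ⟨U, hU1, hU2, hU3, hU4⟩ := hlink' P w T hL hT
    have hwX : {w} ∈ X := hmem w (by simp [hL])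
    obtain ⟨-, h5⟩ := hU4.2 (cplx_lk hX) (k - 1) (pure_lk hp hwX)
    obtain ⟨h6, A, hA⟩ := h5 hU1
    refine ⟨A, ?_⟩
    rw [List.toFinset_cons]
    refine shed_star hX hp hwX (by simpa using hT) ?_ ?_ hU1 ?_ hU3 h6 hA
    · intro t ht
      exact hmem t (by rw [hL]; simp at ht; simp [ht])
    · intro t ht σ hσ h1 h2
      have ht' : t ∈ T := by simpa using ht
      refine hsp.2 w (by simp [hL]) t (by simp [hL, ht']) ?_ ⟨σ, hσ, h1, h2⟩
      rintro rfl
      rw [hL, List.nodup_append] at hnd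
      exact (List.nodup_cons.1 hnd.2.1).1 ht'
    · intro u hu
      exact (mem_verts1 (cplx_lk hX)).1 (hU2 hu)
  · intro P w hL
    obtain ⟨U, hU⟩ := hlast' P w hL
    exact (hU.2 (cplx_lk hX) (k - 1) (pure_lk hp (hmem w (by simp [hL])))).1

theorem GoodData.star_all {L : List V} {X : Finset (Finset V)} {k : ℤ} (h : GoodData L X k) :
    starSet L.toFinset X = X := by
  ext σ
  refine ⟨fun hσ => Finset.filter_subset _ _ hσ, fun hσ => ?_⟩
  exact Finset.mem_filter.2 ⟨hσ, h.part.1 σ hσ⟩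

theorem GoodData.shed {L : List V} {X : Finset (Finset V)} {k : ℤ} (h : GoodData L X k)
    (S : List V) : ∀ P T : List V, L = P ++ (S ++ T) → T ≠ [] →
      ∃ A : List V, ShedTo k A (starSet (S ++ T).toFinset X) (starSet T.toFinset X) := by
  induction S with
  | nil => exact fun P T _ _ => ⟨[], ShedTo.nil _⟩
  | cons w S ih =>
    intro P T hL hT
    obtain ⟨A, hA⟩ := h.link P w (S ++ T) (by simpa using hL) (by simp [hT])
    obtain ⟨B, hB⟩ := ih (P ++ [w]) T (by simpa using hL) hT
    exact ⟨_, hA.append hB⟩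

theorem GoodData.star_last {L : List V} {X : Finset (Finset V)} {k : ℤ} (h : GoodData L X k)
    (w : V) : starSet [w].toFinset X = coneV w (lk {w} X) := by
  ext σ
  rw [mem_coneV (fun σ hσ => (mem_lk1.1 hσ).1), mem_lk1, mem_starSet1 h.cplx, insert_erase1]
  simp

theorem GoodData.vd {L : List V} {X : Finset (Finset V)} {k : ℤ} (h : GoodData L X k)
    (P T : List V) (hL : L = P ++ T) (hT : T ≠ []) : VD (starSet T.toFinset X) := by
  obtain ⟨S, w, rfl⟩ : ∃ S w, T = S ++ [w] :=
    ⟨T.dropLast, T.getLast hT, (List.dropLast_append_getLast hT).symm⟩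
  obtain ⟨A, hA⟩ := h.shed S P [w] hL (by simp)
  refine hA.vd ?_
  rw [h.star_last]
  exact vd_cone (h.last (P ++ S) w (by simpa using hL)) w (cplx_lk h.cplx)
    (fun σ hσ => (mem_lk1.1 hσ).1)

theorem StarDec.good {X : Finset (Finset V)} {X₀ : Finset V} (h : StarDec X X₀) :
    GoodPair X X₀ := by
  induction h with
  | base =>
    refine ⟨by simp, fun _ k _ => ⟨?_, by simp⟩⟩
    simpa using VD.simplex (∅ : Finset V)
  | step X X₀ k hk hpure L hne hnd hsub hsp horder U hUne hUsub hUst hlink Ulast hlast ih1 ih2 =>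
    refine ⟨hpure.1, fun hX k' hk' => ?_⟩
    have hG : GoodData L X k' := GoodData.of hX hk' hnd hsp hne
      (fun i hi => ⟨U i, hUne i hi, hUsub i hi, hUst i hi, ih1 i hi⟩) ⟨_, ih2⟩
    have hvd := hG.vd [] L (by simp) hne
    rw [hG.star_all] at hvd
    refine ⟨hvd, fun _ => ?_⟩
    obtain ⟨i, hi, rfl⟩ := horder
    have hd : L.drop i ≠ [] := by
      simp [List.drop_eq_nil_iff]; omega
    have hLi : L = L.take i ++ L.drop i := (List.take_append_drop i L).symm
    refine ⟨hG.vd _ _ hLi hd, ?_⟩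
    have := hG.shed (L.take i) [] (L.drop i) (by simp) hd
    rwa [List.take_append_drop, hG.star_all] at this

theorem StarDec.pure_or {X : Finset (Finset V)} {X₀ : Finset V} (h : StarDec X X₀) :
    X = {∅} ∨ ∃ k, PureDim X k := by
  induction h with
  | base => exact Or.inl rfl
  | step X X₀ k hk hpure => exact Or.inr ⟨k, hpure⟩

end Helpers

/-- The order relation imposed on consecutive entries of the shedding list. -/
def OrdRel (p : V → ℕ) (L : List V) (a b : V) : Prop :=
  p a < p b ∨ (p a = p b ∧ a ∉ L)

theorem GoodData.ordered {L : List V} {X : Finset (Finset V)} {k : ℤ} (h : GoodData L X k)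
    (p : V → ℕ)
    (hp : ∀ v ∈ verts X, ∃ h : p v < L.length,
      ({v} : Finset V) ∈ star {L.get ⟨p v, h⟩} X ∧
        ∀ j, (hj : j < L.length) → p v < j → ({v} : Finset V) ∉ star {L.get ⟨j, hj⟩} X)
    (S : List V) : ∀ P : List V, L = P ++ S → S ≠ [] →
      ∃ M : List V, SheddingOrder M (starSet S.toFinset X) ∧ M.Pairwise (OrdRel p L) := by
  -- vertices of the star of a suffix have large value of `p`
  have hge : ∀ P S : List V, L = P ++ S → ∀ v, {v} ∈ starSet S.toFinset X → P.length ≤ p v := by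
    intro P S hL v hv
    obtain ⟨w, hw, hwv⟩ := (Finset.mem_filter.1 hv).2
    rw [List.mem_toFinset] at hw
    obtain ⟨j, hj, rfl⟩ := List.getElem_of_mem hw
    obtain ⟨h1, h2, h3⟩ := hp v ((mem_verts1 h.cplx).2 (Finset.mem_filter.1 hv).1)
    by_contra hlt
    refine h3 (P.length + j) (by rw [hL]; simp; omega) (by omega) ?_
    have : L.get ⟨P.length + j, by rw [hL]; simp; omega⟩ = S[j] := by
      subst hL; simp
    rw [this]
    exact Finset.mem_filter.2 ⟨(Finset.mem_filter.1 hv).1, hwv⟩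
  -- vertices with large `p` are in the star of the suffix
  have hle : ∀ P S : List V, L = P ++ S → ∀ v, {v} ∈ X → P.length ≤ p v →
      {v} ∈ starSet S.toFinset X := by
    intro P S hL v hv hP
    obtain ⟨h1, h2, h3⟩ := hp v ((mem_verts1 h.cplx).2 hv)
    refine Finset.mem_filter.2 ⟨hv, _, ?_, (Finset.mem_filter.1 h2).2⟩
    subst hL
    rw [List.mem_toFinset]
    simp [List.getElem_append_right hP]
  -- for entries of `L`, `p` is the position
  have hpos : ∀ v ∈ L, ∃ h : p v < L.length, L.get ⟨p v, h⟩ = v := by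
    intro v hv
    obtain ⟨h1, h2, h3⟩ := hp v ((mem_verts1 h.cplx).2 (h.mem v hv))
    refine ⟨h1, ?_⟩
    by_contra hne
    refine h.part.2 _ (List.mem_toFinset.2 (List.get_mem L ⟨p v, h1⟩)) v
      (List.mem_toFinset.2 hv) hne ⟨_, (Finset.mem_filter.1 h2).2, by simp, by simp⟩
  have hpw : ∀ P w T, L = P ++ w :: T → p w = P.length := by
    intro P w T hL
    obtain ⟨h1, h2⟩ := hpos w (by simp [hL])
    have h3 : P.length < L.length := by rw [hL]; simp
    have h4 : L.get ⟨P.length, h3⟩ = w := by subst hL; simp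
    have := List.nodup_iff_injective_get.1 h.nodup (h2.trans h4.symm)
    simpa using this
  -- block lemma
  have hblock : ∀ P w T, L = P ++ w :: T → ∀ A : List V, w ∉ A →
      (∀ a ∈ A, {a} ∈ starSet (w :: T).toFinset X ∧ {a} ∉ starSet T.toFinset X) →
      (A ++ [w]).Pairwise (OrdRel p L) ∧ ∀ a ∈ A ++ [w], p a = P.length := by
    intro P w T hL A hwA hA
    have hw := hpw P w T hL
    have hpA : ∀ a ∈ A, p a = P.length := by
      intro a ha
      obtain ⟨h1, h2⟩ := hA a ha
      apply le_antisymm _ (hge P _ hL a h1)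
      by_contra hlt
      exact h2 (hle (P ++ [w]) T (by simpa using hL) a (Finset.mem_filter.1 h1).1
        (by simp; omega))
    have hAL : ∀ a ∈ A, a ∉ L := by
      intro a ha haL
      obtain ⟨h1, h2⟩ := hpos a haL
      obtain ⟨h3, h4⟩ := hpos w (by simp [hL])
      have : a = w := by
        rw [← h2, ← h4]
        congr 2
        rw [hpA a ha, hw]
      exact hwA (this ▸ ha)
    have hall : ∀ a ∈ A ++ [w], p a = P.length := by
      intro a ha
      rcases List.mem_append.1 ha with h | h
      · exact hpA a h
      · rw [List.mem_singleton.1 h, hw]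
    refine ⟨?_, hall⟩
    rw [List.pairwise_append]
    refine ⟨?_, by simp, ?_⟩
    · refine List.Pairwise.imp_of_mem (R := fun _ _ => True) ?_ ?_
      · intro a b ha hb _
        exact Or.inr ⟨by rw [hpA a ha, hpA b hb], hAL a ha⟩
      · exact List.pairwise_of_forall (fun _ _ => trivial)
    · intro a ha b hb
      rw [List.mem_singleton.1 hb]
      exact Or.inr ⟨by rw [hpA a ha, hw], hAL a ha⟩
  induction S with
  | nil => exact fun _ _ h => absurd rfl h
  | cons w T ih =>
    intro P hL _
    by_cases hT : T = []
    · subst hT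
      obtain ⟨A, hA⟩ := cone_shedding (h.last P w hL) w (cplx_lk h.cplx)
        (fun σ hσ => (mem_lk1.1 hσ).1)
      rw [← h.star_last] at hA
      refine ⟨_, hA, (hblock P w [] hL A ?_ ?_).1⟩
      · have := (hA.facts (cplx_starSet h.cplx)).1
        rw [List.nodup_append] at this
        intro hw
        exact this.2.2 w hw w (by simp) rfl
      · intro a ha
        refine ⟨?_, by simp [starSet]⟩
        rw [← mem_verts1 (cplx_starSet h.cplx), ← (hA.facts (cplx_starSet h.cplx)).2]
        simp [ha]
    · obtain ⟨A, hA⟩ := h.link P w T hL hT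
      obtain ⟨M, hM, hMp⟩ := ih (P ++ [w]) (by simpa using hL) hT
      have hAM := hA.shedding (cplx_starSet h.cplx) hM
      have hnd := (hAM.facts (cplx_starSet h.cplx)).1
      have hwA : w ∉ A := by
        intro hw
        rw [List.nodup_append, List.nodup_append] at hnd
        exact hnd.1.2.2 w hw w (by simp) rfl
      obtain ⟨b1, b2⟩ := hblock P w T hL A hwA
        (fun a ha => hA.mem a (List.mem_append_left _ ha))
      refine ⟨_, hAM, ?_⟩
      rw [List.pairwise_append]
      refine ⟨b1, hMp, ?_⟩
      intro a ha b hb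
      left
      rw [b2 a ha]
      have hb' : {b} ∈ starSet T.toFinset X := by
        rw [← mem_verts1 (cplx_starSet h.cplx), ← (hM.facts (cplx_starSet h.cplx)).2]
        simpa using hb
      have := hge (P ++ [w]) T (by simpa using hL) b hb'
      simp at this
      omega

/-- Let `X` be star decomposable, with `W = L.toFinset` inducing a star
partition and the order `≺` (encoded by the list `L`) inducing a star decomposition of
`(X, X₀)`.  For `v ∈ V(X)` let `p v` be (the index in `L` of) the `≺`-last vertex of `W`
whose star contains `v`.  Then `X` is vertex decomposable, with a shedding order `M`
extending the partial order `≺'` (`v ≺' v'` iff `p v ≺ p v'`, or `p v = p v'` with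
`v' ∈ W` and `v ≠ v'`). -/
theorem starDec_implies_sheddingOrder {V : Type*} [DecidableEq V] (X : Finset (Finset V))
    (hX : IsCplx X) (X₀ : Finset V) (hSD : StarDec X X₀) (L : List V)
    (hL : InducesStarDecomp L X X₀) (p : V → ℕ)
    (hp : ∀ v ∈ verts X, ∃ h : p v < L.length,
      ({v} : Finset V) ∈ star {L.get ⟨p v, h⟩} X ∧
        ∀ j, (hj : j < L.length) → p v < j → ({v} : Finset V) ∉ star {L.get ⟨j, hj⟩} X) :
    ∃ M : List V, M.Nodup ∧ M.toFinset = verts X ∧ SheddingOrder M X ∧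
      ∀ i j, (hi : i < M.length) → (hj : j < M.length) →
        (p (M.get ⟨i, hi⟩) < p (M.get ⟨j, hj⟩) ∨
          (p (M.get ⟨i, hi⟩) = p (M.get ⟨j, hj⟩) ∧ M.get ⟨j, hj⟩ ∈ L ∧
            M.get ⟨i, hi⟩ ≠ M.get ⟨j, hj⟩)) → i < j := by
  rcases hL with ⟨rfl, rfl, rfl⟩ | ⟨hne, hnd, hsp, -, hlink, U, hlast⟩
  · refine ⟨[], by simp, by simp [verts], ?_, ?_⟩
    · simpa using SheddingOrder.simplex (∅ : Finset V) [] (by simp) (by simp)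
    · intro i j hi
      simp at hi
  · have hpure : ∃ k, PureDim X k := by
      rcases hSD.pure_or with rfl | hk
      · obtain ⟨w, -, hw⟩ := hsp.1 ∅ (by simp)
        simp at hw
      · exact hk
    obtain ⟨k, hpure⟩ := hpure
    have hG : GoodData L X k := GoodData.of hX hpure hnd hsp hne
      (fun i hi => by
        obtain ⟨U, h1, h2, h3, h4⟩ := hlink i hi
        exact ⟨U, h1, h2, h3, h4.good⟩) ⟨U, hlast.good⟩
    obtain ⟨M, hM, hMp⟩ := hG.ordered p hp L [] (by simp) hne
    rw [hG.star_all] at hM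
    obtain ⟨h1, h2⟩ := hM.facts hX
    refine ⟨M, h1, h2, hM, ?_⟩
    intro i j hi hj hij
    by_contra hlt
    rcases Nat.lt_or_ge j i with hji | hji
    · have := List.pairwise_iff_getElem.1 hMp j i hj hi hji
      simp only [List.get_eq_getElem] at hij
      unfold OrdRel at this
      rcases this with h | ⟨h, h'⟩
      · omega
      · rcases hij with h3 | ⟨-, h3, -⟩
        · omega
        · exact h' h3
    · have : i = j := by omega
      subst this
      simp at hij

end Paper
end

section
/- Let X and Y be pure simplicial complexes such that sd X and sd Y are star decomposable in vertices (i.e. the pairs (sd X, V(X)) and (sd Y, V(Y)) are star decomposable in vertices). Let ≺ be a total order on V(X) ⊔ V(Y) such that: (i) the restriction of ≺ to V(X) induces a star decomposition of (sd X, V(X)) in vertices; (ii) the restriction of ≺ to V(Y) induces a star decomposition of (sd Y, V(Y)) in vertices; (iii) if V(X) ≠ ∅ and V(Y) ≠ ∅, then the two ≺-largest elements of V(X) ⊔ V(Y) are the ≺-largest element of V(X) and the ≺-largest element of V(Y) (in either order). Then ≺ induces a star decomposition of (sd(X * Y), V(X) ⊔ V(Y)) in vertices; in particular sd(X * Y)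 is star decomposable in vertices. -/
/-! Common definitions: finite abstract simplicial complexes, links, stars,
barycentric subdivision, joins, collapsibility, shellability, vertex
decomposability, star decomposability (also "in vertices"), and simplicial
homology (reduced, over ℤ and ℤ₂). -/

namespace Paper

open Finset

variable {V : Type*} [DecidableEq V]

section JoinProof

set_option linter.unusedSectionVars false

variable {α β : Type*} [DecidableEq α] [DecidableEq β]

theorem mem_verts' {K : Finset (Finset V)} {v : V} : v ∈ verts K ↔ ∃ σ ∈ K, v ∈ σ := by
  simp [verts, Finset.mem_sup]

theorem mem_lk' {K : Finset (Finset V)} {v : V} {ρ : Finset V} :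
    ρ ∈ lk {v} K ↔ ∃ σ ∈ K, v ∈ σ ∧ σ \ {v} = ρ := by
  simp [lk, and_assoc]

theorem mem_join' {X : Finset (Finset α)} {Y : Finset (Finset β)} {ρ : Finset (α ⊕ β)} :
    ρ ∈ join X Y ↔ ∃ σ ∈ X, ∃ τ ∈ Y, σ.image Sum.inl ∪ τ.image Sum.inr = ρ := by
  simp only [join, Finset.mem_image, Finset.mem_product, Prod.exists]
  constructor
  · rintro ⟨a, b, ⟨h1, h2⟩, h3⟩
    exact ⟨a, h1, b, h2, h3⟩
  · rintro ⟨a, h1, b, h2, h3⟩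
    exact ⟨a, b, ⟨h1, h2⟩, h3⟩

theorem lk_join_inl (X : Finset (Finset α)) (Y : Finset (Finset β)) (a : α) :
    lk {Sum.inl a} (join X Y) = join (lk {a} X) Y := by
  ext ρ
  simp only [mem_lk', mem_join']
  constructor
  · rintro ⟨_, ⟨σ, hσ, τ, hτ, rfl⟩, ha, rfl⟩
    refine ⟨σ \ {a}, ⟨σ, hσ, by simpa using ha, rfl⟩, τ, hτ, ?_⟩
    ext z; cases z <;> simp
  · rintro ⟨_, ⟨σ, hσ, ha, rfl⟩, τ, hτ, rfl⟩
    refine ⟨_, ⟨σ, hσ, τ, hτ, rfl⟩, by simpa using ha, ?_⟩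
    ext z; cases z <;> simp

theorem lk_join_inr (X : Finset (Finset α)) (Y : Finset (Finset β)) (b : β) :
    lk {Sum.inr b} (join X Y) = join X (lk {b} Y) := by
  ext ρ
  simp only [mem_lk', mem_join']
  constructor
  · rintro ⟨_, ⟨σ, hσ, τ, hτ, rfl⟩, ha, rfl⟩
    refine ⟨σ, hσ, τ \ {b}, ⟨τ, hτ, by simpa using ha, rfl⟩, ?_⟩
    ext z; cases z <;> simp
  · rintro ⟨σ, hσ, _, ⟨τ, hτ, ha, rfl⟩, rfl⟩
    refine ⟨_, ⟨σ, hσ, τ, hτ, rfl⟩, by simpa using ha, ?_⟩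
    ext z; cases z <;> simp

theorem verts_join {X : Finset (Finset α)} {Y : Finset (Finset β)} (hX : X.Nonempty)
    (hY : Y.Nonempty) :
    verts (join X Y) = (verts X).image Sum.inl ∪ (verts Y).image Sum.inr := by
  obtain ⟨σ₀, hσ₀⟩ := hX
  obtain ⟨τ₀, hτ₀⟩ := hY
  ext z
  simp only [mem_verts', mem_join', Finset.mem_union, Finset.mem_image]
  constructor
  · rintro ⟨_, ⟨σ, hσ, τ, hτ, rfl⟩, hz⟩
    rcases z with a | b
    · exact Or.inl ⟨a, ⟨σ, hσ, by simpa using hz⟩, rfl⟩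
    · exact Or.inr ⟨b, ⟨τ, hτ, by simpa using hz⟩, rfl⟩
  · rintro (⟨a, ⟨σ, hσ, ha⟩, rfl⟩ | ⟨b, ⟨τ, hτ, hb⟩, rfl⟩)
    · exact ⟨_, ⟨σ, hσ, τ₀, hτ₀, rfl⟩, by simpa using ha⟩
    · exact ⟨_, ⟨σ₀, hσ₀, τ, hτ, rfl⟩, by simpa using hb⟩

theorem card_join_face (σ : Finset α) (τ : Finset β) :
    (σ.image Sum.inl ∪ τ.image Sum.inr : Finset (α ⊕ β)).card = σ.card + τ.card := by
  rw [Finset.card_union_of_disjoint, Finset.card_image_of_injective _ Sum.inl_injective,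
    Finset.card_image_of_injective _ Sum.inr_injective]
  rw [Finset.disjoint_left]
  intro z
  cases z <;> simp

theorem pure_join {X : Finset (Finset α)} {Y : Finset (Finset β)} {k l : ℤ}
    (hX : PureDim X k) (hY : PureDim Y l) : PureDim (join X Y) (k + l + 1) := by
  obtain ⟨⟨σ₀, hσ₀⟩, hX1, hX2⟩ := hX
  obtain ⟨⟨τ₀, hτ₀⟩, hY1, hY2⟩ := hY
  refine ⟨⟨_, mem_join'.2 ⟨σ₀, hσ₀, τ₀, hτ₀, rfl⟩⟩, ?_, ?_⟩
  · intro ρ hρ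
    obtain ⟨σ, hσ, τ, hτ, rfl⟩ := mem_join'.1 hρ
    rw [card_join_face]
    have := hX1 σ hσ
    have := hY1 τ hτ
    push_cast
    linarith
  · intro ρ hρ
    obtain ⟨σ, hσ, τ, hτ, rfl⟩ := mem_join'.1 hρ
    obtain ⟨σ', hσ', hs, hc⟩ := hX2 σ hσ
    obtain ⟨τ', hτ', ht, hd⟩ := hY2 τ hτ
    refine ⟨_, mem_join'.2 ⟨σ', hσ', τ', hτ', rfl⟩,
      Finset.union_subset_union (Finset.image_subset_image hs) (Finset.image_subset_image ht), ?_⟩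
    rw [card_join_face]
    push_cast
    linarith

/-- Split-form of inducing a star decomposition in vertices. -/
def Ind (L : List V) (Y : Finset (Finset V)) : Prop :=
  L.Nodup ∧ L.toFinset = verts Y ∧ (∃ k, PureDim Y k) ∧
  (∀ A w B, L = A ++ w :: B → B ≠ [] → StarDecV (lk {w} Y) (verts (lk {w} Y) ∩ B.toFinset)) ∧
  (∀ A w, L = A ++ [w] → StarDecV (lk {w} Y) (verts (lk {w} Y)))

theorem eq_of_verts_empty {Y : Finset (Finset V)} (hne : Y.Nonempty) (h : verts Y = ∅) :
    Y = {∅} := by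
  have h1 : ∀ σ ∈ Y, σ = ∅ := by
    intro σ hσ
    rw [Finset.eq_empty_iff_forall_notMem]
    intro v hv
    have : v ∈ verts Y := mem_verts'.2 ⟨σ, hσ, hv⟩
    simp [h] at this
  exact Finset.eq_singleton_iff_nonempty_unique_mem.2 ⟨hne, h1⟩

theorem verts_singleton_empty : verts ({∅} : Finset (Finset V)) = ∅ := by simp [verts]

theorem split_forms {L : List V} (hne : L ≠ []) {Y : Finset (Finset V)} :
    ((∀ i, (hi : i + 1 < L.length) →
      StarDecV (lk {L.get ⟨i, Nat.lt_of_succ_lt hi⟩} Y)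
        (verts (lk {L.get ⟨i, Nat.lt_of_succ_lt hi⟩} Y) ∩ (L.drop (i + 1)).toFinset)) ∧
    StarDecV (lk {L.getLast hne} Y) (verts (lk {L.getLast hne} Y))) ↔
    ((∀ A w B, L = A ++ w :: B → B ≠ [] →
        StarDecV (lk {w} Y) (verts (lk {w} Y) ∩ B.toFinset)) ∧
    (∀ A w, L = A ++ [w] → StarDecV (lk {w} Y) (verts (lk {w} Y)))) := by
  constructor
  · rintro ⟨h1, h2⟩
    constructor
    · rintro A w B rfl hB
      have hlen : 0 < B.length := List.length_pos_iff.2 hB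
      have := h1 A.length (by simp; omega)
      simpa using this
    · rintro A w rfl
      simpa using h2
  · rintro ⟨h1, h2⟩
    constructor
    · intro i hi
      refine h1 (L.take i) _ (L.drop (i + 1)) ?_ ?_
      · have := List.take_append_drop i L
        rw [List.drop_eq_getElem_cons (Nat.lt_of_succ_lt hi)] at this
        simpa using this.symm
      · intro h
        simp at h
        omega
    · exact h2 L.dropLast _ (List.dropLast_append_getLast hne).symm

theorem ind_iff {L : List V} {Y : Finset (Finset V)} (hp : ∃ k, PureDim Y k) :
    Ind L Y ↔ InducesStarDecompV L Y (verts Y) := by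
  constructor
  · rintro ⟨hnd, hv, ⟨k, hk⟩, h1, h2⟩
    by_cases hne : L = []
    · left
      subst hne
      have hv' : verts Y = ∅ := by simpa using hv.symm
      exact ⟨rfl, eq_of_verts_empty hk.1 hv', hv'⟩
    · right
      have := (split_forms (Y := Y) hne).2 ⟨h1, h2⟩
      exact ⟨hne, hnd, hv, ⟨0, List.length_pos_iff.2 hne, by simpa using hv.symm⟩, this.1, this.2⟩
  · rintro (⟨rfl, rfl, _⟩ | ⟨hne, hnd, hv, _, h1, h2⟩)
    · refine ⟨List.nodup_nil, by simp [verts_singleton_empty], hp, ?_, ?_⟩ <;> simp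
    · have := (split_forms (Y := Y) hne).1 ⟨h1, h2⟩
      exact ⟨hnd, hv, hp, this.1, this.2⟩

theorem Ind.toSDV {A B : List V} {Y : Finset (Finset V)} (h : Ind (A ++ B) Y)
    (hB : A ++ B = [] ∨ B ≠ []) : StarDecV Y B.toFinset := by
  by_cases hne : A ++ B = []
  · obtain ⟨hA, rfl⟩ := List.append_eq_nil_iff.1 hne
    subst hA
    obtain ⟨hnd, hv, ⟨k, hk⟩, h1, h2⟩ := h
    have := eq_of_verts_empty hk.1 (by simpa using hv.symm)
    subst this
    simpa using StarDecV.base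
  · have hB' : B ≠ [] := hB.resolve_left hne
    obtain ⟨hnd, hv, ⟨k, hk⟩, h1, h2⟩ := h
    have := (split_forms (Y := Y) hne).2 ⟨h1, h2⟩
    have hk0 : 0 ≤ k := by
      obtain ⟨v, hvB⟩ := List.exists_mem_of_ne_nil _ hB'
      have : v ∈ verts Y := by rw [← hv]; simp [hvB]
      obtain ⟨σ, hσ, hvσ⟩ := mem_verts'.1 this
      have h3 := hk.2.1 σ hσ
      have h4 : 0 < σ.card := Finset.card_pos.2 ⟨v, hvσ⟩
      omega
    refine StarDecV.step Y _ k hk0 hk (A ++ B) hne hnd hv ⟨A.length, ?_, by simp⟩ this.1 this.2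
    have := List.length_pos_iff.2 hB'
    simp
    omega

theorem ofSDV {Y : Finset (Finset V)} {Y₀ : Finset V} (h : StarDecV Y Y₀) :
    ∃ A B : List V, Ind (A ++ B) Y ∧ Y₀ = B.toFinset ∧ (A ++ B = [] ∨ B ≠ []) := by
  rcases h with _ | ⟨_, _, k, hk, hpure, L, hne, hnd, hV, horder, hlink, hlast⟩
  · refine ⟨[], [], ⟨List.nodup_nil, by simp [verts_singleton_empty], ⟨-1, ?_⟩, ?_, ?_⟩, ?_⟩
    · simp [PureDim]
    · simp
    · simp
    · simp
  · obtain ⟨i, hi, rfl⟩ := horder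
    have := (split_forms (Y := Y) hne).1 ⟨hlink, hlast⟩
    refine ⟨L.take i, L.drop i, ?_, rfl, Or.inr (by simpa using hi)⟩
    rw [List.take_append_drop]
    exact ⟨hnd, hV, ⟨k, hpure⟩, this.1, this.2⟩

/-- Left restriction. -/
abbrev lf (L : List (α ⊕ β)) : List α := L.filterMap fun z => z.getLeft?
/-- Right restriction. -/
abbrev rt (L : List (α ⊕ β)) : List β := L.filterMap fun z => z.getRight?

theorem lf_inl (l : List α) : lf (l.map (Sum.inl : α → α ⊕ β)) = l := by
  induction l <;> simp_all [lf]
theorem lf_inr (l : List β) : lf (l.map (Sum.inr : β → α ⊕ β)) = [] := by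
  induction l <;> simp_all [lf]
theorem rt_inl (l : List α) : rt (l.map (Sum.inl : α → α ⊕ β)) = [] := by
  induction l <;> simp_all [rt]
theorem rt_inr (l : List β) : rt (l.map (Sum.inr : β → α ⊕ β)) = l := by
  induction l <;> simp_all [rt]
theorem lf_append (l m : List (α ⊕ β)) : lf (l ++ m) = lf l ++ lf m := by simp [lf]
theorem rt_append (l m : List (α ⊕ β)) : rt (l ++ m) = rt l ++ rt m := by simp [rt]
theorem lf_cons_inl (a : α) (m : List (α ⊕ β)) : lf (Sum.inl a :: m) = a :: lf m := by simp [lf]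
theorem lf_cons_inr (a : β) (m : List (α ⊕ β)) : lf (Sum.inr a :: m) = lf m :=
  List.filterMap_cons_none rfl
theorem rt_cons_inl (a : α) (m : List (α ⊕ β)) : rt (Sum.inl a :: m) = rt m :=
  List.filterMap_cons_none rfl
theorem rt_cons_inr (a : β) (m : List (α ⊕ β)) : rt (Sum.inr a :: m) = a :: rt m := by simp [rt]
theorem mem_lf {a : α} {m : List (α ⊕ β)} : a ∈ lf m ↔ Sum.inl a ∈ m := by
  simp [lf]
theorem mem_rt {a : β} {m : List (α ⊕ β)} : a ∈ rt m ↔ Sum.inr a ∈ m := by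
  simp [rt]

theorem nodup_of_lf_rt {L : List (α ⊕ β)} (h1 : (lf L).Nodup) (h2 : (rt L).Nodup) : L.Nodup := by
  induction L with
  | nil => simp
  | cons z L ih =>
    rcases z with a | b
    · rw [lf_cons_inl, List.nodup_cons, mem_lf] at h1
      rw [rt_cons_inl] at h2
      exact List.nodup_cons.2 ⟨h1.1, ih h1.2 h2⟩
    · rw [rt_cons_inr, List.nodup_cons, mem_rt] at h2
      rw [lf_cons_inr] at h1
      exact List.nodup_cons.2 ⟨h2.1, ih h1 h2.2⟩

theorem toFinset_lf_rt (L : List (α ⊕ β)) :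
    L.toFinset = (lf L).toFinset.image Sum.inl ∪ (rt L).toFinset.image Sum.inr := by
  ext z
  cases z
  · simp only [List.mem_toFinset, Finset.mem_union, Finset.mem_image, mem_lf, mem_rt]; simp
  · simp only [List.mem_toFinset, Finset.mem_union, Finset.mem_image, mem_lf, mem_rt]; simp

/-- Condition (iii). -/
def Last2 (L : List (α ⊕ β)) : Prop :=
  lf L ≠ [] → rt L ≠ [] → ∃ (M : List (α ⊕ β)) (a b : α ⊕ β), L = M ++ [a, b] ∧
        ((a.isLeft ∧ b.isRight) ∨ (a.isRight ∧ b.isLeft))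

/-- The merging property for a pair of complexes. -/
def MergeP (X : Finset (Finset α)) (Y : Finset (Finset β)) : Prop :=
  ∀ L : List (α ⊕ β), Ind (lf L) X → Ind (rt L) Y → Last2 L → Ind L (join X Y)

theorem exists_concat {γ : Type*} {l : List γ} (h : l ≠ []) : ∃ m x, l = m ++ [x] :=
  ⟨_, _, (List.dropLast_append_getLast h).symm⟩

/-- Apply the merging property to an explicit list with an explicit final segment. -/
theorem MergeP.apply {X : Finset (Finset α)} {Y : Finset (Finset β)} (hP : MergeP X Y)
    {LX : List α} {LY : List β} (hX : Ind LX X) (hY : Ind LY Y) (A B : List (α ⊕ β))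
    (hl : lf (A ++ B) = LX) (hr : rt (A ++ B) = LY) (hlast : Last2 (A ++ B))
    (hB : A ++ B = [] ∨ B ≠ []) {S : Finset (α ⊕ β)} (hS : S = B.toFinset) :
    StarDecV (join X Y) S := by
  subst hS
  refine Ind.toSDV (A := A) (hP _ ?_ ?_ hlast) hB
  · rw [hl]; exact hX
  · rw [hr]; exact hY

theorem MergeP.both {X : Finset (Finset α)} {Y : Finset (Finset β)} (hP : MergeP X Y)
    {PX QX : List α} {PY QY : List β} (hX : Ind (PX ++ QX) X) (hY : Ind (PY ++ QY) Y)
    (h1 : PX ++ QX = [] ∨ QX ≠ []) (h2 : PY ++ QY = [] ∨ QY ≠ []) :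
    StarDecV (join X Y) (QX.toFinset.image Sum.inl ∪ QY.toFinset.image Sum.inr) := by
  by_cases hx : QX = []
  · have hPX : PX = [] := by simp_all
    subst hx hPX
    refine hP.apply hX hY (PY.map Sum.inr) (QY.map Sum.inr) ?_ ?_ ?_ ?_ ?_
    · simp only [lf_append, lf_inr]
    · simp only [rt_append, rt_inr]
    · intro h; simp only [lf_append, lf_inr] at h; simp at h
    · simpa using h2
    · rw [toFinset_lf_rt, lf_inr, rt_inr]
  by_cases hy : QY = []
  · have hPY : PY = [] := by simp_all
    subst hy hPY
    refine hP.apply hX hY (PX.map Sum.inl) (QX.map Sum.inl) ?_ ?_ ?_ ?_ ?_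
    · simp only [lf_append, lf_inl]
    · simp only [rt_append, rt_inl, List.append_nil]
    · intro _ h; simp only [rt_append, rt_inl] at h; simp at h
    · simpa using h1
    · rw [toFinset_lf_rt, lf_inl, rt_inl]
  obtain ⟨QX', x, rfl⟩ := exists_concat hx
  obtain ⟨QY', y, rfl⟩ := exists_concat hy
  refine hP.apply hX hY (PX.map Sum.inl ++ PY.map Sum.inr)
    (QX'.map Sum.inl ++ QY'.map Sum.inr ++ [Sum.inl x, Sum.inr y]) ?_ ?_ ?_ ?_ ?_
  · simp only [lf_append, lf_inl, lf_inr, lf_cons_inl, lf_cons_inr]; simp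
  · simp only [rt_append, rt_inl, rt_inr, rt_cons_inl, rt_cons_inr]; simp
  · intro _ _
    exact ⟨PX.map Sum.inl ++ PY.map Sum.inr ++ (QX'.map Sum.inl ++ QY'.map Sum.inr), Sum.inl x, Sum.inr y,
      by simp, Or.inl ⟨rfl, rfl⟩⟩
  · right; simp
  · rw [toFinset_lf_rt (_ ++ _)]
    simp only [lf_append, lf_inl, lf_inr, lf_cons_inl, lf_cons_inr,
      rt_append, rt_inl, rt_inr, rt_cons_inl, rt_cons_inr]
    simp

theorem MergeP.lastR {X : Finset (Finset α)} {Y : Finset (Finset β)} (hP : MergeP X Y)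
    {LX : List α} {PY : List β} {y : β} (hX : Ind LX X) (hY : Ind (PY ++ [y]) Y) :
    StarDecV (join X Y) {Sum.inr y} := by
  by_cases hx : LX = []
  · subst hx
    have := hP.both (PX := []) (QX := []) hX hY (by simp) (by simp)
    simpa using this
  obtain ⟨QX', x, rfl⟩ := exists_concat hx
  refine hP.apply hX hY (QX'.map Sum.inl ++ PY.map Sum.inr ++ [Sum.inl x]) [Sum.inr y]
    ?_ ?_ ?_ ?_ ?_
  · simp only [lf_append, lf_inl, lf_inr, lf_cons_inl, lf_cons_inr]; simp
  · simp only [rt_append, rt_inl, rt_inr, rt_cons_inl, rt_cons_inr]; simp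
  · intro _ _
    exact ⟨QX'.map Sum.inl ++ PY.map Sum.inr, Sum.inl x, Sum.inr y, by simp, Or.inl ⟨rfl, rfl⟩⟩
  · right; simp
  · simp

theorem MergeP.lastL {X : Finset (Finset α)} {Y : Finset (Finset β)} (hP : MergeP X Y)
    {LY : List β} {PX : List α} {x : α} (hX : Ind (PX ++ [x]) X) (hY : Ind LY Y) :
    StarDecV (join X Y) {Sum.inl x} := by
  by_cases hy : LY = []
  · subst hy
    have := hP.both (PY := []) (QY := []) hX hY (by simp) (by simp)
    simpa using this
  obtain ⟨QY', y, rfl⟩ := exists_concat hy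
  refine hP.apply hX hY (PX.map Sum.inl ++ QY'.map Sum.inr ++ [Sum.inr y]) [Sum.inl x]
    ?_ ?_ ?_ ?_ ?_
  · simp only [lf_append, lf_inl, lf_inr, lf_cons_inl, lf_cons_inr]; simp
  · simp only [rt_append, rt_inl, rt_inr, rt_cons_inl, rt_cons_inr]; simp
  · intro _ _
    exact ⟨PX.map Sum.inl ++ QY'.map Sum.inr, Sum.inr y, Sum.inl x, by simp, Or.inr ⟨rfl, rfl⟩⟩
  · right; simp
  · simp

/-- In a list ending with two given elements, a non-last element is either the
penultimate one or occurs before it. -/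
theorem split_last2 {γ : Type*} {A B M : List γ} {w u v : γ} (h : A ++ w :: B = M ++ [u, v])
    (hB : B ≠ []) : (w = u ∧ B = [v]) ∨ ∃ B0, B = B0 ++ [u, v] := by
  obtain ⟨B1, v', rfl⟩ := exists_concat hB
  have h' : (A ++ w :: B1) ++ [v'] = (M ++ [u]) ++ [v] := by simpa using h
  obtain ⟨h1, h2⟩ := List.append_inj' h' rfl
  obtain rfl : v' = v := by simpa using h2
  by_cases hB1 : B1 = []
  · subst hB1
    obtain ⟨h3, h4⟩ := List.append_inj' h1 rfl
    left
    exact ⟨by simpa using h4, rfl⟩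
  · obtain ⟨B2, u', rfl⟩ := exists_concat hB1
    have h'' : (A ++ w :: B2) ++ [u'] = M ++ [u] := by simpa using h1
    obtain ⟨h3, h4⟩ := List.append_inj' h'' rfl
    obtain rfl : u' = u := by simpa using h4
    right
    exact ⟨B2, by simp⟩

theorem card_lk {X : Finset (Finset V)} {p : ℕ} (h : ∀ σ ∈ X, σ.card ≤ p + 1) (a : V) :
    ∀ σ ∈ lk {a} X, σ.card ≤ p := by
  intro ρ hρ
  obtain ⟨σ, hσ, ha, rfl⟩ := mem_lk'.1 hρ
  have := h σ hσ
  rw [Finset.card_sdiff_of_subset (by simpa using ha)]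
  simp
  omega

theorem Ind.nonempty {L : List V} {Y : Finset (Finset V)} (h : Ind L Y) : Y.Nonempty := by
  obtain ⟨_, _, ⟨k, hk⟩, _⟩ := h
  exact hk.1

theorem exists_succ_of_mem {X : Finset (Finset V)} {p : ℕ} (h : ∀ σ ∈ X, σ.card ≤ p) {a : V}
    (ha : a ∈ verts X) : ∃ p', p = p' + 1 := by
  obtain ⟨σ, hσ, haσ⟩ := mem_verts'.1 ha
  have := h σ hσ
  have : 0 < σ.card := Finset.card_pos.2 ⟨a, haσ⟩
  exact ⟨p - 1, by omega⟩

theorem verts_inter {X : Finset (Finset α)} {Y : Finset (Finset β)} (hX : X.Nonempty)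
    (hY : Y.Nonempty) (B : List (α ⊕ β)) :
    verts (join X Y) ∩ B.toFinset = (verts X ∩ (lf B).toFinset).image Sum.inl ∪
      (verts Y ∩ (rt B).toFinset).image Sum.inr := by
  rw [verts_join hX hY, toFinset_lf_rt B]
  ext z
  cases z <;> simp

theorem Ind.suffix_sub {A B : List V} {Y : Finset (Finset V)} (h : Ind (A ++ B) Y) :
    verts Y ∩ B.toFinset = B.toFinset := by
  rw [← h.2.1]
  ext z
  simp

theorem stepL {X : Finset (Finset α)} {Y : Finset (Finset β)} {a : α}
    (hP : MergeP (lk {a} X) Y) {A B : List (α ⊕ β)}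
    (hX : Ind (lf (A ++ Sum.inl a :: B)) X) (hY : Ind (rt (A ++ Sum.inl a :: B)) Y)
    (hL : Last2 (A ++ Sum.inl a :: B)) (hB : B ≠ []) :
    StarDecV (lk {Sum.inl a} (join X Y))
      (verts (lk {Sum.inl a} (join X Y)) ∩ B.toFinset) := by
  rw [lk_join_inl]
  unfold Last2 at hL
  rw [lf_append, lf_cons_inl] at hX hL
  rw [rt_append, rt_cons_inl] at hY hL
  by_cases hlB : lf B = []
  · have hrB : rt B ≠ [] := by
      intro h
      obtain ⟨z, hz⟩ := List.exists_mem_of_ne_nil _ hB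
      rcases z with z | z
      · rw [← mem_lf, hlB] at hz; simp at hz
      · rw [← mem_rt, h] at hz; simp at hz
    obtain ⟨M, u, v, hM, huv⟩ := hL (by simp) (by simp [hrB])
    have hBv : ∃ y, B = [Sum.inr y] := by
      rcases split_last2 hM hB with ⟨rfl, rfl⟩ | ⟨B0, rfl⟩
      · rcases v with v | v
        · simp at huv
        · exact ⟨v, rfl⟩
      · exfalso
        rcases u with u | u
        · simp [lf] at hlB
        · rcases v with v | v
          · simp [lf] at hlB
          · simp at huv
    obtain ⟨y, rfl⟩ := hBv
    rw [hlB] at hX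
    obtain ⟨C, D, hI, -, -⟩ := ofSDV (hX.2.2.2.2 _ _ rfl)
    have hr : rt ([Sum.inr y] : List (α ⊕ β)) = [y] := by simp [rt]
    rw [verts_inter hI.nonempty hY.nonempty, hlB, hY.suffix_sub]
    rw [hr] at hY ⊢
    simpa using hP.lastR hI hY
  · obtain ⟨C, D, hI, hD, hCD⟩ := ofSDV (hX.2.2.2.1 _ _ _ rfl hlB)
    rw [verts_inter hI.nonempty hY.nonempty, hD, hY.suffix_sub]
    refine hP.both hI hY hCD ?_
    by_contra! hcon
    obtain ⟨h1, h2⟩ := hcon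
    obtain ⟨M, u, v, hM, huv⟩ := hL (by simp) h1
    rcases split_last2 hM hB with ⟨rfl, rfl⟩ | ⟨B0, rfl⟩
    · rcases v with v | v
      · simp at huv
      · simp [rt] at h2
    · rcases u with u | u
      · rcases v with v | v
        · simp at huv
        · simp [rt] at h2
      · simp [rt] at h2

theorem stepL_last {X : Finset (Finset α)} {Y : Finset (Finset β)} {a : α}
    (hP : MergeP (lk {a} X) Y) {A : List (α ⊕ β)}
    (hX : Ind (lf (A ++ [Sum.inl a])) X) (hY : Ind (rt (A ++ [Sum.inl a])) Y) :
    StarDecV (lk {Sum.inl a} (join X Y)) (verts (lk {Sum.inl a} (join X Y))) := by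
  rw [lk_join_inl]
  rw [lf_append, lf_cons_inl] at hX
  obtain ⟨C, D, hI, -, -⟩ := ofSDV (hX.2.2.2.2 _ _ rfl)
  rw [verts_join hI.nonempty hY.nonempty]
  have := hP.both (PX := []) (PY := []) (QX := C ++ D) hI hY (by simp [or_iff_not_imp_left])
    (by simp [or_iff_not_imp_left])
  rwa [hI.2.1, hY.2.1] at this

theorem stepR {X : Finset (Finset α)} {Y : Finset (Finset β)} {a : β}
    (hP : MergeP X (lk {a} Y)) {A B : List (α ⊕ β)}
    (hY : Ind (rt (A ++ Sum.inr a :: B)) Y) (hX : Ind (lf (A ++ Sum.inr a :: B)) X)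
    (hL : Last2 (A ++ Sum.inr a :: B)) (hB : B ≠ []) :
    StarDecV (lk {Sum.inr a} (join X Y))
      (verts (lk {Sum.inr a} (join X Y)) ∩ B.toFinset) := by
  rw [lk_join_inr]
  unfold Last2 at hL
  rw [rt_append, rt_cons_inr] at hY hL
  rw [lf_append, lf_cons_inr] at hX hL
  by_cases hrB : rt B = []
  · have hlB : lf B ≠ [] := by
      intro h
      obtain ⟨z, hz⟩ := List.exists_mem_of_ne_nil _ hB
      rcases z with z | z
      swap
      · rw [← mem_rt, hrB] at hz; simp at hz
      · rw [← mem_lf, h] at hz; simp at hz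
    obtain ⟨M, u, v, hM, huv⟩ := hL (by simp [hlB]) (by simp)
    have hBv : ∃ y, B = [Sum.inl y] := by
      rcases split_last2 hM hB with ⟨rfl, rfl⟩ | ⟨B0, rfl⟩
      · rcases v with v | v
        swap
        · simp at huv
        · exact ⟨v, rfl⟩
      · exfalso
        rcases u with u | u
        swap
        · simp [rt] at hrB
        · rcases v with v | v
          swap
          · simp [rt] at hrB
          · simp at huv
    obtain ⟨y, rfl⟩ := hBv
    rw [hrB] at hY
    obtain ⟨C, D, hI, -, -⟩ := ofSDV (hY.2.2.2.2 _ _ rfl)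
    have hr : lf ([Sum.inl y] : List (α ⊕ β)) = [y] := by simp [lf]
    rw [verts_inter hX.nonempty hI.nonempty, hrB, hX.suffix_sub]
    rw [hr] at hX ⊢
    simpa using hP.lastL hX hI
  · obtain ⟨C, D, hI, hD, hCD⟩ := ofSDV (hY.2.2.2.1 _ _ _ rfl hrB)
    rw [verts_inter hX.nonempty hI.nonempty, hD, hX.suffix_sub]
    refine hP.both hX hI ?_ hCD
    by_contra! hcon
    obtain ⟨h1, h2⟩ := hcon
    obtain ⟨M, u, v, hM, huv⟩ := hL h1 (by simp)
    rcases split_last2 hM hB with ⟨rfl, rfl⟩ | ⟨B0, rfl⟩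
    · rcases v with v | v
      swap
      · simp at huv
      · simp [lf] at h2
    · rcases u with u | u
      swap
      · rcases v with v | v
        swap
        · simp at huv
        · simp [lf] at h2
      · simp [lf] at h2

theorem stepR_last {X : Finset (Finset α)} {Y : Finset (Finset β)} {a : β}
    (hP : MergeP X (lk {a} Y)) {A : List (α ⊕ β)}
    (hY : Ind (rt (A ++ [Sum.inr a])) Y) (hX : Ind (lf (A ++ [Sum.inr a])) X) :
    StarDecV (lk {Sum.inr a} (join X Y)) (verts (lk {Sum.inr a} (join X Y))) := by
  rw [lk_join_inr]
  rw [rt_append, rt_cons_inr] at hY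
  obtain ⟨C, D, hI, -, -⟩ := ofSDV (hY.2.2.2.2 _ _ rfl)
  rw [verts_join hX.nonempty hI.nonempty]
  have := hP.both (PX := []) (PY := []) (QY := C ++ D) hX hI (by simp [or_iff_not_imp_left])
    (by simp [or_iff_not_imp_left])
  rwa [hX.2.1, hI.2.1] at this

theorem mergeP_of_card (n : ℕ) : ∀ (p q : ℕ) (X : Finset (Finset α)) (Y : Finset (Finset β)),
    p + q < n → (∀ σ ∈ X, σ.card ≤ p) → (∀ σ ∈ Y, σ.card ≤ q) → MergeP X Y := by
  induction n with
  | zero => intro p q X Y h; omega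
  | succ n ih =>
    intro p q X Y hn hp hq
    have hA : ∀ a ∈ verts X, MergeP (lk {a} X) Y := by
      intro a ha
      obtain ⟨p', rfl⟩ := exists_succ_of_mem hp ha
      exact ih p' q _ _ (by omega) (card_lk hp a) hq
    have hB : ∀ b ∈ verts Y, MergeP X (lk {b} Y) := by
      intro b hb
      obtain ⟨q', rfl⟩ := exists_succ_of_mem hq hb
      exact ih p q' _ _ (by omega) hp (card_lk hq b)
    intro L hX hY hL
    have hvL : ∀ a, Sum.inl a ∈ L → a ∈ verts X := by
      intro a ha
      rw [← hX.2.1, List.mem_toFinset, mem_lf]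
      exact ha
    have hvR : ∀ b, Sum.inr b ∈ L → b ∈ verts Y := by
      intro b hb
      rw [← hY.2.1, List.mem_toFinset, mem_rt]
      exact hb
    refine ⟨nodup_of_lf_rt hX.1 hY.1, ?_, ?_, ?_, ?_⟩
    · rw [verts_join hX.nonempty hY.nonempty, toFinset_lf_rt L, hX.2.1, hY.2.1]
    · obtain ⟨k, hk⟩ := hX.2.2.1
      obtain ⟨l, hl⟩ := hY.2.2.1
      exact ⟨_, pure_join hk hl⟩
    · rintro A (a | b) B rfl hne
      · exact stepL (hA a (hvL a (by simp))) hX hY hL hne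
      · exact stepR (hB b (hvR b (by simp))) hY hX hL hne
    · rintro A (a | b) rfl
      · exact stepL_last (hA a (hvL a (by simp))) hX hY
      · exact stepR_last (hB b (hvR b (by simp))) hY hX

end JoinProof

/-- Merging star decompositions in vertices along a join: if `sd X` and
`sd Y` are star decomposable in vertices, and `≺` (encoded by the list `L` on
`V(X) ⊔ V(Y)`) restricts to star decompositions in vertices of `(sd X, V(X))` and
`(sd Y, V(Y))`, and (when both are nonempty) the two largest elements of `≺` are the
largest element of `V(X)` and the largest element of `V(Y)`, then `≺` induces a star
decomposition of `(sd (X * Y), V(X) ⊔ V(Y))` in vertices; in particular `sd (X * Y)` is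
star decomposable in vertices. -/
theorem join_starDecV {α β : Type*} [DecidableEq α] [DecidableEq β]
    (X : Finset (Finset α)) (Y : Finset (Finset β)) (hX : IsCplx X) (hY : IsCplx Y)
    (hpX : ∃ dX : ℤ, PureDim X dX) (hpY : ∃ dY : ℤ, PureDim Y dY)
    (hsdX : StarDecV X (verts X)) (hsdY : StarDecV Y (verts Y))
    (L : List (α ⊕ β)) (hnd : L.Nodup)
    (hcov : L.toFinset = (verts X).image Sum.inl ∪ (verts Y).image Sum.inr)
    (hresX : InducesStarDecompV (L.filterMap fun z => z.getLeft?) X (verts X))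
    (hresY : InducesStarDecompV (L.filterMap fun z => z.getRight?) Y (verts Y))
    (hlast2 : (verts X).Nonempty → (verts Y).Nonempty →
      ∃ (M : List (α ⊕ β)) (a b : α ⊕ β), L = M ++ [a, b] ∧
        ((a.isLeft ∧ b.isRight) ∨ (a.isRight ∧ b.isLeft))) :
    InducesStarDecompV L (join X Y) (verts (join X Y)) ∧
      StarDecV (join X Y) (verts (join X Y)) := by
  have hIX := (ind_iff hpX).2 hresX
  have hIY := (ind_iff hpY).2 hresY
  have hL2 : Last2 L := by
    intro h1 h2
    apply hlast2
    · rw [← hIX.2.1]; simpa using List.exists_mem_of_ne_nil _ h1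
    · rw [← hIY.2.1]; simpa using List.exists_mem_of_ne_nil _ h2
  have hI : Ind L (join X Y) :=
    mergeP_of_card _ (X.sup Finset.card) (Y.sup Finset.card) X Y (Nat.lt_succ_self _)
      (fun σ hσ => Finset.le_sup (f := Finset.card) hσ)
      (fun σ hσ => Finset.le_sup (f := Finset.card) hσ) L hIX hIY hL2
  refine ⟨(ind_iff hI.2.2.1).1 hI, ?_⟩
  have := Ind.toSDV (A := []) (B := L) hI (by simp [or_iff_not_imp_left])
  rwa [hI.2.1] at this

end Paper
end
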